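/- For every m ≥ 1 and r > 0 there exists a family of linear operators S_{t,r} : C^∞_0(B̄_r) → C^∞_0(B̄_r), indexed by t ≥ 1, such that for all n, k, l ∈ ℕ there are constants C = C(n,k,l,r) > 0 with, for all f ∈ C^∞_0(B̄_r) and all t ≥ 1: ⟨S_{t,r}(f)⟩_{n+l,k,r} ≤ C · t^l · ⟨f⟩_{n,k+2l,r} and ⟨(S_{t,r} − id)(f)⟩_{n,k+2l,r} ≤ C · t^{-l} · ⟨f⟩_{n+l,k,r}. -/

import Mathlib

open Metric Set

/-- Membership in `C^∞₀(B̄_r)`: smooth on the closed ball and flat at the origin. -/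
def FlatSmoothOnBall (m : ℕ) (r : ℝ) (f : EuclideanSpace ℝ (Fin m) → ℝ) : Prop :=
  ContDiffOn ℝ (⊤ : ℕ∞) f (closedBall 0 r) ∧
    ∀ i : ℕ, iteratedFDerivWithin ℝ i f (closedBall 0 r) 0 = 0

/-- The weighted norm `⟨f⟩_{n,k,r}` on flat functions on the closed ball. -/
noncomputable def flatNorm (m : ℕ) (r : ℝ) (n k : ℕ)
    (f : EuclideanSpace ℝ (Fin m) → ℝ) : ℝ :=
  ⨆ p : (closedBall (0 : EuclideanSpace ℝ (Fin m)) r \ {0} :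
      Set (EuclideanSpace ℝ (Fin m))) × Fin (n + 1),
    ‖(p.1 : EuclideanSpace ℝ (Fin m))‖ ^ (-(k : ℤ)) *
      ‖iteratedFDerivWithin ℝ p.2 f (closedBall 0 r) p.1‖


namespace FS
open Filter Topology MeasureTheory
open scoped ContDiff Nat

section basic
variable {E F G : Type*} [NormedAddCommGroup E] [NormedSpace ℝ E]
  [NormedAddCommGroup F] [NormedSpace ℝ F] [NormedAddCommGroup G] [NormedSpace ℝ G]

lemma exists_open_contDiffOn {f : E → F} {x : E} {n : ℕ} (hf : ContDiffAt ℝ n f x) :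
    ∃ u, IsOpen u ∧ x ∈ u ∧ ContDiffOn ℝ n f u := by
  have h := hf.eventually (by simp)
  obtain ⟨u, hu, huo, hxu⟩ := _root_.eventually_nhds_iff.1 h
  exact ⟨u, huo, hxu, fun y hy => (hu y hy).contDiffWithinAt⟩

lemma comp_le {f : E → F} {g : F → G} {x : E} {n : ℕ} (hg : ContDiffAt ℝ n g (f x))
    (hf : ContDiffAt ℝ n f x) {C D : ℝ}
    (hC : ∀ i, i ≤ n → ‖iteratedFDeriv ℝ i g (f x)‖ ≤ C)
    (hD : ∀ i, 1 ≤ i → i ≤ n → ‖iteratedFDeriv ℝ i f x‖ ≤ D ^ i) :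
    ‖iteratedFDeriv ℝ n (fun y => g (f y)) x‖ ≤ n ! * C * D ^ n := by
  obtain ⟨t, hto, hxt, hgt⟩ := exists_open_contDiffOn hg
  obtain ⟨s, hso, hxs, hfs⟩ := exists_open_contDiffOn hf
  have hso' : IsOpen (s ∩ f ⁻¹' t) := hfs.continuousOn.isOpen_inter_preimage hso hto
  have hx : x ∈ s ∩ f ⁻¹' t := ⟨hxs, hxt⟩
  have := norm_iteratedFDerivWithin_comp_le (n := n) hgt (hfs.mono inter_subset_left) le_rfl
    hto.uniqueDiffOn hso'.uniqueDiffOn (fun y hy => hy.2) hx (C := C) (D := D) ?_ ?_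
  · rwa [iteratedFDerivWithin_of_isOpen n hso' hx] at this
  · intro i hi
    rw [iteratedFDerivWithin_of_isOpen i hto hxt]; exact hC i hi
  · intro i h1 hi
    rw [iteratedFDerivWithin_of_isOpen i hso' hx]; exact hD i h1 hi

lemma smul_le {f : E → ℝ} {g : E → F} {x : E} {n : ℕ} (hf : ContDiffAt ℝ n f x)
    (hg : ContDiffAt ℝ n g x) {A B M : ℝ} (hA0 : 0 ≤ A) (hM : 0 ≤ M)
    (hA : ∀ i, i ≤ n → ‖iteratedFDeriv ℝ i f x‖ ≤ A * M ^ i)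
    (hB : ∀ i, i ≤ n → ‖iteratedFDeriv ℝ i g x‖ ≤ B * M ^ i) :
    ‖iteratedFDeriv ℝ n (fun y => f y • g y) x‖ ≤ 2 ^ n * A * B * M ^ n := by
  obtain ⟨t, hto, hxt, hft⟩ := exists_open_contDiffOn hf
  obtain ⟨s, hso, hxs, hgs⟩ := exists_open_contDiffOn hg
  have ho := hto.inter hso
  have hx : x ∈ t ∩ s := ⟨hxt, hxs⟩
  have := norm_iteratedFDerivWithin_smul_le (n := n) (hft.mono inter_subset_left)
    (hgs.mono inter_subset_right) ho.uniqueDiffOn hx le_rfl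
  rw [iteratedFDerivWithin_of_isOpen n ho hx] at this
  refine this.trans ?_
  calc _ ≤ ∑ i ∈ Finset.range (n + 1), (n.choose i : ℝ) * (A * B * M ^ n) := by
        apply Finset.sum_le_sum
        intro i hi
        have hi' : i ≤ n := Nat.lt_succ_iff.1 (Finset.mem_range.1 hi)
        rw [iteratedFDerivWithin_of_isOpen i ho hx, iteratedFDerivWithin_of_isOpen _ ho hx,
          mul_assoc]
        refine mul_le_mul_of_nonneg_left ?_ (by positivity)
        calc _ ≤ (A * M ^ i) * (B * M ^ (n - i)) :=
              mul_le_mul (hA i hi') (hB _ (Nat.sub_le _ _)) (norm_nonneg _) (by positivity)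
          _ = A * B * (M ^ i * M ^ (n - i)) := by ring
          _ = _ := by rw [← pow_add, Nat.add_sub_cancel' hi']
    _ = 2 ^ n * A * B * M ^ n := by
        rw [← Finset.sum_mul]
        have := Nat.sum_range_choose n
        have h2 : (∑ i ∈ Finset.range (n + 1), (n.choose i : ℝ)) = 2 ^ n := by exact_mod_cast this
        rw [h2]; ring

/-- differentiation under the integral, all orders, on an open set -/
lemma integral_smooth {Ω : Type*} [MeasurableSpace Ω] (μ : Measure Ω) [CompleteSpace F]
    {ph : Ω → E → F} {U : Set E}
    (hU : IsOpen U) (h1 : ∀ᵐ w ∂μ, ContDiffOn ℝ ∞ (ph w) U)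
    (hm : ∀ n : ℕ, ∀ x ∈ U, AEStronglyMeasurable (fun w => iteratedFDeriv ℝ n (ph w) x) μ)
    (hb : ∀ n : ℕ, ∀ x ∈ U, ∃ s ∈ 𝓝 x, ∃ b : Ω → ℝ, Integrable b μ ∧
      ∀ᵐ w ∂μ, ∀ y ∈ s, ‖iteratedFDeriv ℝ n (ph w) y‖ ≤ b w) :
    (∀ n : ℕ, ∀ x ∈ U, iteratedFDeriv ℝ n (fun y => ∫ w, ph w y ∂μ) x
      = ∫ w, iteratedFDeriv ℝ n (ph w) x ∂μ) ∧
    ContDiffOn ℝ ∞ (fun y => ∫ w, ph w y ∂μ) U := by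
  have hintg : ∀ n : ℕ, ∀ x ∈ U, Integrable (fun w => iteratedFDeriv ℝ n (ph w) x) μ := by
    intro n x hx
    obtain ⟨s, hs, b, hbi, hb⟩ := hb n x hx
    exact hbi.mono' (hm n x hx) (hb.mono fun w hw => hw x (mem_of_mem_nhds hs))
  have key : ∀ n : ℕ, ∀ x ∈ U, HasFDerivAt (fun y => ∫ w, iteratedFDeriv ℝ n (ph w) y ∂μ)
      (∫ w, fderiv ℝ (iteratedFDeriv ℝ n (ph w)) x ∂μ) x := by
    intro n x hx
    obtain ⟨s, hs, b, hbi, hb⟩ := hb (n + 1) x hx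
    have hs' : s ∩ U ∈ 𝓝 x := inter_mem hs (hU.mem_nhds hx)
    obtain ⟨ε, hε, hball⟩ := Metric.mem_nhds_iff.1 hs'
    refine hasFDerivAt_integral_of_dominated_of_fderiv_le
      (F' := fun y w => fderiv ℝ (iteratedFDeriv ℝ n (ph w)) y) (ball_mem_nhds x hε) (bound := b)
      ?_ (hintg n x hx) ?_ ?_ hbi ?_
    · filter_upwards [hU.mem_nhds hx] with y hy using hm n y hy
    · have := hm (n + 1) x hx
      simp only [iteratedFDeriv_succ_eq_comp_left, Function.comp_def] at this
      have h2 := ((continuousMultilinearCurryLeftEquiv ℝ (fun _ : Fin (n+1) => E)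
        F).continuous.comp_aestronglyMeasurable this)
      simpa [Function.comp_def] using h2
    · filter_upwards [hb] with w hw y hy
      rw [norm_fderiv_iteratedFDeriv]
      exact hw y (hball hy).1
    · filter_upwards [h1] with w hw y hy
      have hc : ContDiffAt ℝ ∞ (ph w) y := hw.contDiffAt (hU.mem_nhds (hball hy).2)
      exact (hc.differentiableAt_iteratedFDeriv (by exact_mod_cast WithTop.coe_lt_top _)).hasFDerivAt
  have hmain : ∀ n : ℕ, ∀ x ∈ U, iteratedFDeriv ℝ n (fun y => ∫ w, ph w y ∂μ) x
      = ∫ w, iteratedFDeriv ℝ n (ph w) x ∂μ := by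
    intro n
    induction n with
    | zero =>
      intro x hx
      simp only [iteratedFDeriv_zero_eq_comp, Function.comp_def]
      exact ((continuousMultilinearCurryFin0 ℝ E F).symm.toContinuousLinearEquiv.integral_comp_comm _).symm
    | succ n ih =>
      intro x hx
      have heq : iteratedFDeriv ℝ n (fun y => ∫ w, ph w y ∂μ) =ᶠ[𝓝 x]
          fun y => ∫ w, iteratedFDeriv ℝ n (ph w) y ∂μ := by
        filter_upwards [hU.mem_nhds hx] with y hy using ih y hy
      simp only [iteratedFDeriv_succ_eq_comp_left, Function.comp_def]
      rw [heq.fderiv_eq, (key n x hx).fderiv]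
      exact (ContinuousLinearEquiv.integral_comp_comm (X := Ω) (μ := μ) (𝕜 := ℝ)
        (E := E →L[ℝ] E [×n]→L[ℝ] F)
        (F := E [×(n+1)]→L[ℝ] F) (continuousMultilinearCurryLeftEquiv ℝ (fun _ : Fin (n+1) => E)
        F).symm.toContinuousLinearEquiv
        (fun w => fderiv ℝ (iteratedFDeriv ℝ n (ph w)) x)).symm
  refine ⟨hmain, contDiffOn_of_differentiableOn ?_⟩
  intro n _ x hx
  have heq : iteratedFDerivWithin ℝ n (fun y => ∫ w, ph w y ∂μ) U =ᶠ[𝓝 x]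
      fun y => ∫ w, iteratedFDeriv ℝ n (ph w) y ∂μ := by
    filter_upwards [hU.mem_nhds hx] with y hy
    rw [iteratedFDerivWithin_of_isOpen n hU hy, hmain n y hy]
  exact ((key n x hx).differentiableAt.congr_of_eventuallyEq heq).differentiableWithinAt

/-- slice derivative from joint smoothness -/
lemma slice_iteratedFDeriv {Ψ : E × F → G} {O : Set (E × F)} (hO : IsOpen O)
    (h : ContDiffOn ℝ ∞ Ψ O) (n : ℕ) {x : E} {z : F} (hx : (x, z) ∈ O) :
    iteratedFDeriv ℝ n (fun y => Ψ (y, z)) x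
      = (iteratedFDeriv ℝ n Ψ (x, z)).compContinuousLinearMap
        (fun _ => ContinuousLinearMap.inl ℝ E F) := by
  set Ψ' : E × F → G := fun p => Ψ (p + (0, z)) with hΨ'
  have hO' : IsOpen ((fun p : E × F => p + (0, z)) ⁻¹' O) := hO.preimage (by fun_prop)
  have h' : ContDiffOn ℝ ∞ Ψ' ((fun p : E × F => p + (0, z)) ⁻¹' O) :=
    h.comp (by fun_prop) (fun _ h => h)
  have e1 : (fun y => Ψ (y, z)) = Ψ' ∘ (ContinuousLinearMap.inl ℝ E F) := by
    ext y; simp [hΨ']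
  have hxm : ContinuousLinearMap.inl ℝ E F x ∈ ((fun p : E × F => p + (0, z)) ⁻¹' O) := by
    simpa using hx
  have hO'' : IsOpen ((ContinuousLinearMap.inl ℝ E F) ⁻¹' ((fun p : E × F => p + (0, z)) ⁻¹' O)) :=
    hO'.preimage (ContinuousLinearMap.continuous _)
  have := (ContinuousLinearMap.inl ℝ E F).iteratedFDerivWithin_comp_right h' hO'.uniqueDiffOn
    hO''.uniqueDiffOn hxm (i := n) (by exact_mod_cast le_top)
  rw [iteratedFDerivWithin_of_isOpen n hO'' hxm, iteratedFDerivWithin_of_isOpen n hO' hxm] at this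
  rw [e1, this, hΨ', iteratedFDeriv_comp_add_right]
  simp

lemma slice_continuousOn {Ψ : E × F → G} {O : Set (E × F)} (hO : IsOpen O)
    (h : ContDiffOn ℝ ∞ Ψ O) (n : ℕ) :
    ContinuousOn (fun p : E × F => iteratedFDeriv ℝ n (fun y => Ψ (y, p.2)) p.1) O := by
  have h1 : ContinuousOn (iteratedFDeriv ℝ n Ψ) O := by
    refine (h.continuousOn_iteratedFDerivWithin (m := n) (by exact_mod_cast le_top)
      hO.uniqueDiffOn).congr ?_
    intro p hp
    rw [iteratedFDerivWithin_of_isOpen n hO hp]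
  have h2 : ContinuousOn (fun p => ContinuousMultilinearMap.compContinuousLinearMapL
      (fun _ : Fin n => ContinuousLinearMap.inl ℝ E F) (iteratedFDeriv ℝ n Ψ p)) O :=
    (ContinuousLinearMap.continuous _).comp_continuousOn h1
  refine h2.congr ?_
  rintro ⟨x, z⟩ hp
  exact (slice_iteratedFDeriv hO h n hp)

/-- parametric integral over a compact set of a jointly smooth function -/
lemma integral_compact_smooth [FiniteDimensional ℝ E] [MeasurableSpace F] [BorelSpace F]
    [FiniteDimensional ℝ F]
    [CompleteSpace G] (μ : Measure F) [IsFiniteMeasureOnCompacts μ] {Ψ : E × F → G} {U : Set E}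
    {V K : Set F} (hU : IsOpen U) (hV : IsOpen V) (hK : IsCompact K) (hKV : K ⊆ V)
    (h : ContDiffOn ℝ ∞ Ψ (U ×ˢ V)) :
    (∀ n : ℕ, ∀ x ∈ U, iteratedFDeriv ℝ n (fun y => ∫ z in K, Ψ (y, z) ∂μ) x
      = ∫ z in K, iteratedFDeriv ℝ n (fun y => Ψ (y, z)) x ∂μ) ∧
    ContDiffOn ℝ ∞ (fun y => ∫ z in K, Ψ (y, z) ∂μ) U := by
  have hO := hU.prod hV
  have : SecondCountableTopology F := by
    have : ProperSpace F := FiniteDimensional.proper ℝ F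
    infer_instance
  have : ProperSpace E := FiniteDimensional.proper ℝ E
  refine integral_smooth (μ.restrict K) hU ?_ ?_ ?_
  · refine (ae_restrict_iff' hK.measurableSet).2 (Eventually.of_forall fun z hz => ?_)
    exact h.comp (by fun_prop) (fun y hy => ⟨hy, hKV hz⟩)
  · intro n x hx
    refine ContinuousOn.aestronglyMeasurable_of_isCompact ?_ hK hK.measurableSet
    exact (slice_continuousOn hO h n).comp (f := fun z => (x, z)) (by fun_prop)
      (fun z hz => ⟨hx, hKV hz⟩)
  · intro n x hx
    obtain ⟨ε, hε, hball⟩ := Metric.nhds_basis_closedBall.mem_iff.1 (hU.mem_nhds hx)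
    have hc : IsCompact (closedBall x ε ×ˢ K) := (isCompact_closedBall x ε).prod hK
    obtain ⟨C, hC⟩ := hc.exists_bound_of_continuousOn
      ((slice_continuousOn hO h n).mono (prod_mono hball hKV))
    refine ⟨closedBall x ε, closedBall_mem_nhds x hε, fun _ => C, ?_, ?_⟩
    · have : IsFiniteMeasure (μ.restrict K) := ⟨by simpa using hK.measure_lt_top⟩
      exact integrable_const C
    · refine (ae_restrict_iff' hK.measurableSet).2 (Eventually.of_forall fun z hz y hy => ?_)
      exact hC (y, z) ⟨hy, hz⟩

end basic
end FS


namespace FS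
open Filter Topology MeasureTheory
open scoped ContDiff Nat

lemma natle (n : ℕ) : ((n : ℕ) : WithTop ℕ∞) ≤ ∞ := by exact_mod_cast le_top
lemma natlt (n : ℕ) : ((n : ℕ) : WithTop ℕ∞) < ∞ := by
  exact_mod_cast WithTop.coe_lt_top n

section symm
variable {E F G : Type*} [NormedAddCommGroup E] [NormedSpace ℝ E]
  [NormedAddCommGroup F] [NormedSpace ℝ F] [NormedAddCommGroup G] [NormedSpace ℝ G]

lemma iteratedFDeriv_swap {U : Set E} (hU : IsOpen U) {f : E → F} (hf : ContDiffOn ℝ ∞ f U) :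
    ∀ (n : ℕ) (i : Fin n), ∀ x ∈ U, ∀ v : Fin (n + 1) → E,
      iteratedFDeriv ℝ (n + 1) f x (v ∘ Equiv.swap i.castSucc i.succ)
        = iteratedFDeriv ℝ (n + 1) f x v := by
  intro n
  induction n with
  | zero => intro i; exact i.elim0
  | succ n ih =>
    intro i x hx v
    have hfx : ContDiffAt ℝ ∞ f x := hf.contDiffAt (hU.mem_nhds hx)
    have hd : ∀ k : ℕ, ∀ y ∈ U, DifferentiableAt ℝ (iteratedFDeriv ℝ k f) y := fun k y hy =>
      (hf.contDiffAt (hU.mem_nhds hy)).differentiableAt_iteratedFDeriv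
        (natlt _)
    refine Fin.cases ?_ (fun j => ?_) i
    · -- second derivative symmetric
      have hsm : ContDiffAt ℝ 2 (iteratedFDeriv ℝ n f) x :=
        hfx.iteratedFDeriv_right (m := 2) (by
          exact_mod_cast natle (2 + n))
      have hs := hsm.isSymmSndFDerivAt (by simp)
      have expand : ∀ w : Fin (n + 1 + 1) → E, iteratedFDeriv ℝ (n + 1 + 1) f x w
          = fderiv ℝ (fderiv ℝ (iteratedFDeriv ℝ n f)) x (w 0) (w 1) (Fin.tail (Fin.tail w)) := by
        intro w
        rw [iteratedFDeriv_succ_apply_left]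
        have e : (fderiv ℝ (iteratedFDeriv ℝ (n + 1) f) x (w 0)) (Fin.tail w)
          = fderiv ℝ (fun y => iteratedFDeriv ℝ (n + 1) f y (Fin.tail w)) x (w 0) :=
          (congrArg (fun L => L (w 0))
          ((hd (n+1) x hx).hasFDerivAt.continuousMultilinear_apply_const (Fin.tail w)).fderiv).symm
        rw [e]
        have h1 : HasFDerivAt (fderiv ℝ (iteratedFDeriv ℝ n f))
            (fderiv ℝ (fderiv ℝ (iteratedFDeriv ℝ n f)) x) x :=
          ((hsm.fderiv_right (m := 1) (by norm_num)).differentiableAt (by simp)).hasFDerivAt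
        have h2 := (h1.clm_apply (hasFDerivAt_const (w 1) x)).continuousMultilinear_apply_const
          (Fin.tail (Fin.tail w))
        have h3 : (fun y => iteratedFDeriv ℝ (n + 1) f y (Fin.tail w)) = fun y =>
          (fderiv ℝ (iteratedFDeriv ℝ n f) y (w 1)) (Fin.tail (Fin.tail w)) := by
          ext y
          rw [iteratedFDeriv_succ_apply_left]; rfl
        rw [h3, h2.fderiv]
        simp
      rw [expand, expand, hs]
      have h1 : (v ∘ Equiv.swap (Fin.castSucc (0 : Fin (n+1))) (Fin.succ 0)) 0 = v 1 := by simp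
      have h2 : (v ∘ Equiv.swap (Fin.castSucc (0 : Fin (n+1))) (Fin.succ 0)) 1 = v 0 := by simp
      have h3 : Fin.tail (Fin.tail (v ∘ Equiv.swap (Fin.castSucc (0 : Fin (n+1))) (Fin.succ 0)))
          = Fin.tail (Fin.tail v) := by
        ext k
        simp only [Fin.tail, Function.comp]
        rw [Equiv.swap_apply_of_ne_of_ne] <;> simp [Fin.ext_iff]
      rw [h1, h2, h3]
    · rw [iteratedFDeriv_succ_apply_left, iteratedFDeriv_succ_apply_left]
      have h0 : (v ∘ Equiv.swap j.succ.castSucc j.succ.succ) 0 = v 0 := by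
        simp only [Function.comp]
        rw [Equiv.swap_apply_of_ne_of_ne] <;> simp [Fin.ext_iff]
      have ht : Fin.tail (v ∘ Equiv.swap j.succ.castSucc j.succ.succ)
          = Fin.tail v ∘ Equiv.swap j.castSucc j.succ := by
        ext k
        simp only [Fin.tail, Function.comp]
        congr 1
        have := (Fin.succ_injective (n + 1)).swap_apply j.castSucc j.succ k
        rw [← Fin.succ_castSucc]
        exact this
      rw [h0, ht]
      set w := Fin.tail v
      have e : ∀ u : Fin (n + 1) → E, (fderiv ℝ (iteratedFDeriv ℝ (n + 1) f) x (v 0)) u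
          = fderiv ℝ (fun y => iteratedFDeriv ℝ (n + 1) f y u) x (v 0) := by
        intro u
        exact (congrArg (fun L => L (v 0))
          ((hd (n+1) x hx).hasFDerivAt.continuousMultilinear_apply_const u).fderiv).symm
      rw [e, e]
      congr 1
      apply Filter.EventuallyEq.fderiv_eq
      filter_upwards [hU.mem_nhds hx] with y hy using ih j y hy w

lemma iteratedFDeriv_perm {U : Set E} (hU : IsOpen U) {f : E → F} (hf : ContDiffOn ℝ ∞ f U)
    (n : ℕ) {x : E} (hx : x ∈ U) (v : Fin n → E) (s : Equiv.Perm (Fin n)) :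
    iteratedFDeriv ℝ n f x (v ∘ s) = iteratedFDeriv ℝ n f x v := by
  cases n with
  | zero => congr 1; ext i; exact i.elim0
  | succ n =>
    have : s ∈ Submonoid.closure
        (Set.range fun i : Fin n => Equiv.swap i.castSucc i.succ) := by
      rw [Equiv.Perm.mclosure_swap_castSucc_succ]; trivial
    induction this using Submonoid.closure_induction generalizing v with
    | mem y hy =>
      obtain ⟨i, rfl⟩ := hy
      exact iteratedFDeriv_swap hU hf n i x hx v
    | one => rfl
    | mul a b _ _ ha hb =>
      have : v ∘ ⇑(a * b) = (v ∘ a) ∘ b := rfl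
      rw [this, hb, ha]

/-- Derivatives at the base point of the homogeneous polynomials. -/
lemma iteratedFDeriv_diag {n : ℕ} (T : E [×n]→L[ℝ] ℝ)
    (hT : ∀ (v : Fin n → E) (s : Equiv.Perm (Fin n)), T (v ∘ s) = T v) (x0 : E) (i : ℕ) :
    iteratedFDeriv ℝ i (fun y => T (fun _ => y - x0)) x0 =
      if h : i = n then (n ! : ℝ) • (h ▸ T) else 0 := by
  classical
  set p : FormalMultilinearSeries ℝ E ℝ := fun k => if h : k = n then h ▸ T else 0 with hp
  have hpz : ∀ k, p (n + 1 + k) = 0 := fun k => by simp [hp]; omega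
  have hrad : p.radius = ⊤ := p.radius_eq_top_of_forall_image_add_eq_zero (n + 1) (by
    intro k; rw [add_comm]; exact hpz k)
  have hsum : p.sum = fun y => T (fun _ => y) := by
    ext y
    rw [FormalMultilinearSeries.sum, tsum_eq_single n]
    · simp [hp]
    · intro k hk; simp [hp, hk]
  have h1 := p.hasFPowerSeriesOnBall (by rw [hrad]; simp)
  have h2 := h1.comp_sub x0
  rw [hsum, zero_add] at h2
  ext v
  rw [h2.iteratedFDeriv_eq_sum_of_completeSpace]
  by_cases h : i = n
  · subst h
    simp only [hp, dite_true]
    have : ∀ s : Equiv.Perm (Fin i), T (fun j => v (s j)) = T v := fun s => hT v s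
    simp [this, Fintype.card_perm]
  · simp [hp, h]

/-- Taylor polynomial at `x0` of order `< N`. -/
noncomputable def taylorP (f : E → ℝ) (x0 : E) (N : ℕ) (y : E) : ℝ :=
  ∑ j ∈ Finset.range N, ((j ! : ℝ)⁻¹ • iteratedFDeriv ℝ j f x0) (fun _ => y - x0)

lemma contDiff_taylorP (f : E → ℝ) (x0 : E) (N : ℕ) : ContDiff ℝ ∞ (taylorP f x0 N) := by
  unfold taylorP
  apply ContDiff.sum
  intro j _
  exact (ContinuousMultilinearMap.contDiff _).comp (by fun_prop)

lemma iteratedFDeriv_taylorP {U : Set E} (hU : IsOpen U) {f : E → ℝ} (hf : ContDiffOn ℝ ∞ f U)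
    {x0 : E} (hx : x0 ∈ U) {N i : ℕ} (hi : i < N) :
    iteratedFDeriv ℝ i (taylorP f x0 N) x0 = iteratedFDeriv ℝ i f x0 := by
  unfold taylorP
  rw [iteratedFDeriv_fun_sum_apply]
  swap
  · intro j _
    exact ((ContinuousMultilinearMap.contDiff _).comp (by fun_prop)).contDiffAt
  rw [Finset.sum_congr rfl fun j _ => iteratedFDeriv_diag ((j ! : ℝ)⁻¹ • iteratedFDeriv ℝ j f x0)
    (fun v s => by simp [iteratedFDeriv_perm hU hf j hx]) x0 i]
  rw [Finset.sum_eq_single i]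
  · simp only [dite_true]
    rw [smul_smul, mul_inv_cancel₀ (by positivity), one_smul]
  · intro j _ hj; simp [hj.symm]
  · intro h; simp at h; omega

/-- Functions with vanishing low order derivatives are small. -/
lemma vanish_bound {U C : Set E} (hU : IsOpen U) {g : E → F} (hg : ContDiffOn ℝ ∞ g U)
    (hCU : C ⊆ U) (hC : Convex ℝ C) {x0 : E} (hx0 : x0 ∈ C) {N : ℕ}
    (h0 : ∀ i < N, iteratedFDeriv ℝ i g x0 = 0) {M : ℝ}
    (hM : ∀ y ∈ C, ‖iteratedFDeriv ℝ N g y‖ ≤ M) :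
    ∀ k, k ≤ N → ∀ y ∈ C, ‖iteratedFDeriv ℝ (N - k) g y‖ ≤ M * ‖y - x0‖ ^ k := by
  intro k
  induction k with
  | zero => intro _ y hy; simpa using hM y hy
  | succ k ih =>
    intro hk y hy
    have hM0 : 0 ≤ M := (norm_nonneg _).trans (hM x0 hx0)
    have hk' : N - (k + 1) + 1 = N - k := by omega
    have hseg : segment ℝ x0 y ⊆ C := hC.segment_subset hx0 hy
    have key := Convex.norm_image_sub_le_of_norm_fderiv_le (𝕜 := ℝ)
      (f := iteratedFDeriv ℝ (N - (k + 1)) g) (C := M * ‖y - x0‖ ^ k) (s := segment ℝ x0 y)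
      (x := x0) (y := y) ?_ ?_ (convex_segment x0 y) (left_mem_segment ℝ x0 y)
      (right_mem_segment ℝ x0 y)
    · rw [h0 _ (by omega), sub_zero] at key
      rw [pow_succ, ← mul_assoc]; exact key
    · intro z hz
      exact (hg.contDiffAt (hU.mem_nhds (hCU (hseg hz)))).differentiableAt_iteratedFDeriv
        (natlt _)
    · intro z hz
      rw [norm_fderiv_iteratedFDeriv, hk']
      refine (ih (by omega) z (hseg hz)).trans ?_
      have : ‖z - x0‖ ≤ ‖y - x0‖ := by
        obtain ⟨t, ht, rfl⟩ := (segment_eq_image_lineMap ℝ x0 y ▸ hz : z ∈ AffineMap.lineMap x0 y '' Icc (0:ℝ) 1)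
        simp only [AffineMap.lineMap_apply, vsub_eq_sub, vadd_eq_add, add_sub_cancel_right, norm_smul]
        rw [Real.norm_of_nonneg ht.1]
        exact mul_le_of_le_one_left (norm_nonneg _) ht.2
      gcongr

end symm
end FS


namespace FS
open Filter Topology MeasureTheory
open scoped ContDiff Nat

/-- Coefficients of the Euler function with base one half. -/
noncomputable def cEul : ℕ → ℝ
  | 0 => 1
  | k + 1 => -((1 / 2 : ℝ) ^ k) * cEul k / (1 - (1 / 2 : ℝ) ^ (k + 1))

lemma cEul_rec (k : ℕ) : cEul (k + 1) * (1 - (1 / 2 : ℝ) ^ (k + 1)) = -((1 / 2 : ℝ) ^ k) * cEul k := by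
  have : (1 / 2 : ℝ) ^ (k + 1) < 1 := pow_lt_one₀ (by norm_num) (by norm_num) (by simp)
  rw [cEul, div_mul_cancel₀]
  linarith

lemma cEul_abs (k : ℕ) : |cEul (k + 1)| ≤ 2 * (1 / 2 : ℝ) ^ k * |cEul k| := by
  have h : (1 / 2 : ℝ) ^ (k + 1) ≤ 1 / 2 := by
    rw [pow_succ]
    have : (1 / 2 : ℝ) ^ k ≤ 1 := pow_le_one₀ (by norm_num) (by norm_num)
    linarith
  have h2 := congrArg abs (cEul_rec k)
  rw [abs_mul, abs_mul, abs_neg, abs_of_nonneg (by linarith : (0:ℝ) ≤ 1 - (1 / 2 : ℝ) ^ (k + 1)),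
    abs_of_nonneg (by positivity : (0:ℝ) ≤ (1 / 2 : ℝ) ^ k)] at h2
  have : |cEul (k + 1)| * (1 / 2) ≤ |cEul (k + 1)| * (1 - (1 / 2 : ℝ) ^ (k + 1)) :=
    mul_le_mul_of_nonneg_left (by linarith) (abs_nonneg _)
  linarith

lemma cEul_summable (R : ℝ) : Summable (fun k => |cEul k| * R ^ k) := by
  have hlim : Tendsto (fun k : ℕ => 2 * (1 / 2 : ℝ) ^ k * |R|) atTop (𝓝 0) := by
    have := (tendsto_pow_atTop_nhds_zero_of_lt_one (r := (1/2 : ℝ)) (by norm_num) (by norm_num))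
    simpa using (this.const_mul 2).mul_const |R|
  refine summable_of_ratio_norm_eventually_le (r := 1 / 2) (by norm_num) ?_
  filter_upwards [hlim.eventually (gt_mem_nhds (by norm_num : (0:ℝ) < 1 / 2))] with k hk
  simp only [norm_mul, norm_pow, Real.norm_eq_abs, abs_abs]
  calc |cEul (k + 1)| * |R| ^ (k + 1) ≤ (2 * (1 / 2 : ℝ) ^ k * |cEul k|) * |R| ^ (k + 1) := by
        gcongr; exact cEul_abs k
    _ = (2 * (1 / 2 : ℝ) ^ k * |R|) * (|cEul k| * |R| ^ k) := by ring
    _ ≤ 1 / 2 * (|cEul k| * |R| ^ k) := by gcongr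

lemma cEul_summable' (x : ℝ) : Summable (fun k => cEul k * x ^ k) := by
  refine Summable.of_norm_bounded (cEul_summable |x|) (fun k => ?_)
  simp

noncomputable def Eul (x : ℝ) : ℝ := ∑' k, cEul k * x ^ k

lemma Eul_eq (x : ℝ) : Eul x = (1 - x) * Eul (x / 2) := by
  have h1 := (cEul_summable' x).hasSum
  have h2 := (cEul_summable' (x / 2)).hasSum
  have e1 := (cEul_summable' x).tsum_eq_zero_add
  have e2 := (cEul_summable' (x / 2)).tsum_eq_zero_add
  have s1 := (summable_nat_add_iff 1).2 (cEul_summable' x)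
  have s2 := (summable_nat_add_iff 1).2 (cEul_summable' (x / 2))
  have e3 : ∑' k, cEul (k + 1) * x ^ (k + 1) = ∑' k, cEul (k + 1) * (x / 2) ^ (k + 1)
      - x * Eul (x / 2) := by
    rw [Eul, ← tsum_mul_left, ← s2.tsum_sub ((cEul_summable' (x / 2)).mul_left x)]
    congr 1; ext k
    have := cEul_rec k
    have h3 : cEul (k + 1) = cEul (k + 1) * (1 / 2) ^ (k + 1) - (1 / 2) ^ k * cEul k := by linarith
    calc cEul (k + 1) * x ^ (k + 1)
        = (cEul (k + 1) * (1 / 2) ^ (k + 1) - (1 / 2) ^ k * cEul k) * x ^ (k + 1) := by rw [← h3]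
      _ = _ := by rw [div_eq_mul_one_div, mul_pow, mul_pow]; ring
  have : Eul x = cEul 0 * x ^ 0 + ∑' k, cEul (k + 1) * x ^ (k + 1) := e1
  have h' : Eul (x / 2) = cEul 0 * (x / 2) ^ 0 + ∑' k, cEul (k + 1) * (x / 2) ^ (k + 1) := e2
  rw [this, e3]
  simp only [pow_zero] at *
  linarith

lemma Eul_two_pow (j : ℕ) : Eul (2 ^ j) = 0 := by
  induction j with
  | zero => rw [Eul_eq]; simp
  | succ j ih => rw [Eul_eq, pow_succ, mul_div_assoc, div_self (by norm_num), mul_one, ih, mul_zero]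

lemma Eul_half_ne : Eul (1 / 2) ≠ 0 := by
  intro h
  have h0 : ∀ n : ℕ, Eul ((1 / 2) ^ (n + 1)) = 0 := by
    intro n
    induction n with
    | zero => simpa using h
    | succ n ih =>
      have := Eul_eq ((1 / 2) ^ (n + 1))
      rw [ih] at this
      have hlt : (1 / 2 : ℝ) ^ (n + 1) < 1 := pow_lt_one₀ (by norm_num) (by norm_num) (by simp)
      rcases mul_eq_zero.1 this.symm with h | h
      · linarith
      · rw [pow_succ, mul_one_div]; exact h
  set A := ∑' k, |cEul (k + 1)| with hA
  have sA : Summable (fun k => |cEul (k + 1)|) := by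
    have := (summable_nat_add_iff 1).2 (cEul_summable 1)
    simpa using this
  have hb : ∀ x : ℝ, 0 ≤ x → x ≤ 1 → |Eul x - 1| ≤ A * x := by
    intro x hx hx1
    have e1 : Eul x = cEul 0 * x ^ 0 + ∑' k, cEul (k + 1) * x ^ (k + 1) :=
      (cEul_summable' x).tsum_eq_zero_add
    have : Eul x - 1 = ∑' k, cEul (k + 1) * x ^ (k + 1) := by rw [e1]; simp [cEul]
    rw [this, hA, ← tsum_mul_right]
    rw [← Real.norm_eq_abs]
    refine tsum_of_norm_bounded (sA.mul_right x).hasSum (fun k => ?_)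
    rw [norm_mul, Real.norm_eq_abs, Real.norm_eq_abs, abs_of_nonneg (by positivity : 0 ≤ x ^ (k + 1))]
    refine mul_le_mul_of_nonneg_left ?_ (abs_nonneg _)
    rw [pow_succ]
    exact mul_le_of_le_one_left hx (pow_le_one₀ hx hx1)
  have hlim : Tendsto (fun n : ℕ => A * (1 / 2 : ℝ) ^ (n + 1)) atTop (𝓝 0) := by
    have := (tendsto_pow_atTop_nhds_zero_of_lt_one (r := (1/2 : ℝ)) (by norm_num) (by norm_num))
    have h2 := ((tendsto_add_atTop_iff_nat 1).2 this).const_mul A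
    simpa using h2
  obtain ⟨n, hn⟩ := (hlim.eventually (gt_mem_nhds (by norm_num : (0:ℝ) < 1))).exists
  have := hb ((1 / 2) ^ (n + 1)) (by positivity) (pow_le_one₀ (by norm_num) (by norm_num))
  rw [h0] at this
  norm_num at this
  norm_num at hn
  linarith

lemma exists_b : ∃ b : ℕ → ℝ, (∀ p : ℕ, Summable fun k => |b k| * ((2 : ℝ) ^ k) ^ p) ∧
    (∑' k, b k = 1) ∧ ∀ j : ℕ, 1 ≤ j → ∑' k, b k * ((2 : ℝ) ^ k) ^ j = 0 := by
  refine ⟨fun k => cEul k * (1 / 2) ^ k / Eul (1 / 2), ?_, ?_, ?_⟩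
  · intro p
    refine ((cEul_summable ((1 / 2) * 2 ^ p)).mul_right (|Eul (1 / 2)|⁻¹)).congr (fun k => ?_)
    rw [abs_div, abs_mul, abs_of_nonneg (by positivity : (0:ℝ) ≤ (1 / 2) ^ k), mul_pow, ← pow_mul,
      ← pow_mul, mul_comm p k]
    ring
  · rw [tsum_div_const]; exact div_self Eul_half_ne
  · intro j hj
    obtain ⟨i, rfl⟩ := Nat.exists_eq_add_of_le hj
    have : ∀ k, cEul k * (1 / 2) ^ k / Eul (1 / 2) * ((2 : ℝ) ^ k) ^ (1 + i)
        = cEul k * (2 ^ i) ^ k / Eul (1 / 2) := by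
      intro k
      have : (1 / 2 : ℝ) ^ k * ((2 : ℝ) ^ k) ^ (1 + i) = (2 ^ i) ^ k := by
        rw [pow_add, pow_one, ← mul_assoc, ← mul_pow, ← pow_mul, ← pow_mul, mul_comm i k]
        norm_num
      rw [← this]; ring
    simp_rw [this]
    rw [tsum_div_const]
    have := Eul_two_pow i
    unfold Eul at this
    rw [this, zero_div]

lemma exp_rem (L : ℕ) : ∃ C : ℝ, 0 ≤ C ∧ ∀ y : ℝ, 0 ≤ y →
    |Real.exp (-y) - ∑ i ∈ Finset.range L, (-y) ^ i / (i ! : ℝ)| ≤ C * y ^ L := by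
  refine ⟨Real.exp 1 + (1 + L), by positivity, fun y hy => ?_⟩
  rcases le_total y 1 with h | h
  · have := Complex.norm_exp_sub_sum_le_norm_mul_exp (-(y : ℂ)) L
    have e : Complex.exp (-(y : ℂ)) - ∑ m ∈ Finset.range L, (-(y : ℂ)) ^ m / (m ! : ℂ)
      = ((Real.exp (-y) - ∑ i ∈ Finset.range L, (-y) ^ i / (i ! : ℝ) : ℝ) : ℂ) := by
      push_cast; rfl
    rw [e, Complex.norm_real, norm_neg, Complex.norm_real, Real.norm_eq_abs, Real.norm_of_nonneg hy]
      at this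
    refine this.trans ?_
    have h2 : Real.exp y ≤ Real.exp 1 := Real.exp_le_exp.2 h
    have h3 : 0 ≤ y ^ L := by positivity
    nlinarith [mul_le_mul_of_nonneg_left h2 h3, mul_nonneg (by positivity : (0:ℝ) ≤ 1 + L) h3]
  · have h1 : |Real.exp (-y)| ≤ y ^ L := by
      rw [Real.abs_exp]
      exact (Real.exp_le_one_iff.2 (by linarith)).trans (one_le_pow₀ h)
    have h2 : |∑ i ∈ Finset.range L, (-y) ^ i / (i ! : ℝ)| ≤ L * y ^ L := by
      refine (Finset.abs_sum_le_sum_abs _ _).trans ?_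
      have : ∀ i ∈ Finset.range L, |(-y) ^ i / (i ! : ℝ)| ≤ y ^ L := by
        intro i hi
        rw [abs_div, abs_pow, abs_neg, abs_of_nonneg hy, abs_of_nonneg (by positivity)]
        refine (div_le_self (by positivity) (by exact_mod_cast Nat.one_le_iff_ne_zero.2 (Nat.factorial_ne_zero i))).trans ?_
        exact pow_le_pow_right₀ h (Finset.mem_range.1 hi).le
      refine (Finset.sum_le_card_nsmul _ _ _ this).trans ?_
      simp
    have h4 : 0 ≤ Real.exp 1 * y ^ L := by positivity
    calc _ ≤ _ := abs_sub _ _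
      _ ≤ y ^ L + L * y ^ L := add_le_add h1 h2
      _ ≤ _ := by linarith

section Ea
variable (b : ℕ → ℝ)

/-- The functions `∑ b_k (-a λ_k)^j exp(-a λ_k s)`. -/
noncomputable def Gf (a : ℝ) (j : ℕ) (s : ℝ) : ℝ :=
  ∑' k, b k * (-(a * 2 ^ k)) ^ j * Real.exp (-(a * 2 ^ k) * s)

variable {b}

lemma Gf_bound {a : ℝ} (ha : 0 ≤ a) (j k : ℕ) {s : ℝ} (hs : 0 ≤ s) :
    ‖b k * (-(a * 2 ^ k)) ^ j * Real.exp (-(a * 2 ^ k) * s)‖ ≤ a ^ j * (|b k| * (2 ^ k) ^ j) := by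
  rw [norm_mul, norm_mul, Real.norm_eq_abs, Real.norm_eq_abs, Real.norm_eq_abs, Real.abs_exp,
    abs_pow, abs_neg, abs_of_nonneg (by positivity : 0 ≤ a * 2 ^ k), mul_pow]
  have : Real.exp (-(a * 2 ^ k) * s) ≤ 1 := Real.exp_le_one_iff.2 (by
    have : 0 ≤ a * 2 ^ k * s := by positivity
    linarith)
  calc _ ≤ |b k| * (a ^ j * (2 ^ k) ^ j) * 1 := by gcongr
    _ = _ := by ring

lemma Gf_summable (hb : ∀ p : ℕ, Summable fun k => |b k| * ((2 : ℝ) ^ k) ^ p)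
    {a : ℝ} (ha : 0 ≤ a) (j : ℕ) {s : ℝ} (hs : 0 ≤ s) :
    Summable fun k => b k * (-(a * 2 ^ k)) ^ j * Real.exp (-(a * 2 ^ k) * s) :=
  Summable.of_norm_bounded ((hb j).mul_left (a ^ j)) (fun k => Gf_bound ha j k hs)

lemma Gf_deriv (hb : ∀ p : ℕ, Summable fun k => |b k| * ((2 : ℝ) ^ k) ^ p)
    {a : ℝ} (ha : 0 ≤ a) (j : ℕ) {s : ℝ} (hs : 0 < s) :
    HasDerivAt (Gf b a j) (Gf b a (j + 1) s) s := by
  refine hasDerivAt_tsum_of_isPreconnected (t := Ioi 0)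
    (g := fun k s => b k * (-(a * 2 ^ k)) ^ j * Real.exp (-(a * 2 ^ k) * s))
    (g' := fun k s => b k * (-(a * 2 ^ k)) ^ (j + 1) * Real.exp (-(a * 2 ^ k) * s))
    ((hb (j + 1)).mul_left (a ^ (j + 1))) isOpen_Ioi isPreconnected_Ioi ?_ ?_ hs
    (Gf_summable hb ha j hs.le) hs
  · intro k y _
    have h1 : HasDerivAt (fun s => -(a * 2 ^ k) * s) (-(a * 2 ^ k)) y := by
      simpa using (hasDerivAt_id y).const_mul (-(a * 2 ^ k))
    convert! (h1.exp).const_mul (b k * (-(a * 2 ^ k)) ^ j) using 1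
    ring
  · intro k y hy
    exact Gf_bound ha (j + 1) k (le_of_lt hy)

lemma Gf_contDiffOn (hb : ∀ p : ℕ, Summable fun k => |b k| * ((2 : ℝ) ^ k) ^ p)
    {a : ℝ} (ha : 0 ≤ a) (n : ℕ) : ∀ j, ContDiffOn ℝ n (Gf b a j) (Ioi 0) := by
  induction n with
  | zero =>
    intro j
    simp only [Nat.cast_zero]
    rw [contDiffOn_zero]
    exact fun s hs => (Gf_deriv hb ha j hs).continuousAt.continuousWithinAt
  | succ n ih =>
    intro j
    have := (contDiffOn_succ_iff_deriv_of_isOpen (𝕜 := ℝ) (n := (n : WithTop ℕ∞)) (f := Gf b a j) isOpen_Ioi).2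
      ⟨fun s hs => (Gf_deriv hb ha j hs).differentiableAt.differentiableWithinAt, by simp,
        (ih (j + 1)).congr fun s hs => (Gf_deriv hb ha j hs).deriv⟩
    exact_mod_cast this

lemma Gf_iter (hb : ∀ p : ℕ, Summable fun k => |b k| * ((2 : ℝ) ^ k) ^ p)
    {a : ℝ} (ha : 0 ≤ a) (j : ℕ) : ∀ s, 0 < s →
    iteratedDeriv j (Gf b a 0) s = Gf b a j s := by
  induction j with
  | zero => intro s _; simp
  | succ j ih =>
    intro s hs
    rw [iteratedDeriv_succ]
    have : iteratedDeriv j (Gf b a 0) =ᶠ[𝓝 s] Gf b a j := by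
      filter_upwards [Ioi_mem_nhds hs] with y hy using ih y hy
    rw [this.deriv_eq, (Gf_deriv hb ha j hs).deriv]

lemma Ea_bound (hb : ∀ p : ℕ, Summable fun k => |b k| * ((2 : ℝ) ^ k) ^ p)
    (h1 : ∑' k, b k = 1) (h2 : ∀ j : ℕ, 1 ≤ j → ∑' k, b k * ((2 : ℝ) ^ k) ^ j = 0)
    {a : ℝ} (ha : 0 ≤ a) (L j : ℕ) : ∃ C : ℝ, 0 ≤ C ∧ ∀ s, 0 < s →
      ‖iteratedFDeriv ℝ j (fun s => Gf b a 0 s - 1) s‖ ≤ C * s ^ (L + 1) := by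
  obtain ⟨C, hC, hrem⟩ := exp_rem (L + 1)
  refine ⟨C * a ^ (j + (L + 1)) * ∑' k, |b k| * (2 ^ k) ^ (j + (L + 1)), ?_, ?_⟩
  · have : 0 ≤ ∑' k, |b k| * ((2:ℝ) ^ k) ^ (j + (L + 1)) := tsum_nonneg fun k => by positivity
    positivity
  intro s hs
  rw [norm_iteratedFDeriv_eq_norm_iteratedDeriv]
  -- the derivative as a sum of remainders
  have hbs : ∀ p, Summable fun k => b k * ((2 : ℝ) ^ k) ^ p := fun p =>
    Summable.of_norm_bounded (hb p) (fun k => by simp)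
  have hT : ∀ i, Summable fun k => b k * (-(a * 2 ^ k)) ^ j * ((-(a * 2 ^ k * s)) ^ i / (i ! : ℝ)) := by
    intro i
    refine ((hbs (j + i)).mul_left ((-a) ^ j * (-(a * s)) ^ i / (i ! : ℝ))).congr fun k => ?_
    rw [pow_add, ← neg_mul, mul_pow, show -(a * 2 ^ k * s) = (-(a * s)) * 2 ^ k by ring, mul_pow]
    ring
  have hTs : ∀ i, ∑' k, b k * (-(a * 2 ^ k)) ^ j * ((-(a * 2 ^ k * s)) ^ i / (i ! : ℝ))
      = if j + i = 0 then 1 else 0 := by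
    intro i
    have e : ∀ k, b k * (-(a * 2 ^ k)) ^ j * ((-(a * 2 ^ k * s)) ^ i / (i ! : ℝ))
        = ((-a) ^ j * (-(a * s)) ^ i / (i ! : ℝ)) * (b k * (2 ^ k) ^ (j + i)) := by
      intro k
      rw [pow_add, ← neg_mul, mul_pow, show -(a * 2 ^ k * s) = (-(a * s)) * 2 ^ k by ring, mul_pow]
      ring
    simp_rw [e]
    rw [tsum_mul_left]
    split_ifs with h
    · obtain ⟨rfl, rfl⟩ : j = 0 ∧ i = 0 := by omega
      simp [h1]
    · rw [h2 _ (by omega), mul_zero]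
  have hmain : iteratedDeriv j (fun s => Gf b a 0 s - 1) s
      = ∑' k, b k * (-(a * 2 ^ k)) ^ j * (Real.exp (-(a * 2 ^ k * s))
        - ∑ i ∈ Finset.range (L + 1), (-(a * 2 ^ k * s)) ^ i / (i ! : ℝ)) := by
    have e1 : iteratedDeriv j (fun s => Gf b a 0 s - 1) s = Gf b a j s - if j = 0 then 1 else 0 := by
      cases j with
      | zero => simp
      | succ j =>
        have : iteratedDeriv (j + 1) (fun s => Gf b a 0 s - 1) s = iteratedDeriv (j + 1) (Gf b a 0) s := by
          rw [iteratedDeriv_succ', iteratedDeriv_succ']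
          congr 1; ext x; simp
        rw [this, Gf_iter hb ha _ s hs]; simp
    have e2 : (if j = 0 then (1:ℝ) else 0) = ∑' k, ∑ i ∈ Finset.range (L + 1),
        b k * (-(a * 2 ^ k)) ^ j * ((-(a * 2 ^ k * s)) ^ i / (i ! : ℝ)) := by
      rw [Summable.tsum_finsetSum (fun i _ => hT i), Finset.sum_congr rfl fun i _ => hTs i,
        Finset.sum_range_succ', Finset.sum_eq_zero]
      · simp
      · intro i _; simp
    rw [e1, e2]
    have hG := Gf_summable hb ha j hs.le
    rw [Gf, ← hG.tsum_sub (summable_sum fun i _ => hT i)]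
    congr 1; ext k
    rw [mul_sub, Finset.mul_sum, neg_mul]
  rw [hmain, mul_assoc, mul_assoc, ← tsum_mul_right, ← tsum_mul_left, ← tsum_mul_left]
  refine tsum_of_norm_bounded (Summable.hasSum ?_) (fun k => ?_)
  · exact (((hb (j + (L+1))).mul_right _).mul_left _).mul_left _
  · rw [norm_mul, norm_mul, Real.norm_eq_abs, Real.norm_eq_abs, Real.norm_eq_abs,
      abs_pow, abs_neg, abs_of_nonneg (by positivity : 0 ≤ a * 2 ^ k)]
    calc _ ≤ |b k| * (a * 2 ^ k) ^ j * (C * (a * 2 ^ k * s) ^ (L + 1)) := by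
          gcongr; exact hrem _ (by positivity)
      _ = _ := by rw [mul_pow, mul_pow, mul_pow, pow_add a, pow_add (2 ^ k)]; ring

end Ea
end FS


namespace FS
open Filter Topology MeasureTheory
open scoped ContDiff Nat

section aff
variable {E F : Type*} [NormedAddCommGroup E] [NormedSpace ℝ E]
  [NormedAddCommGroup F] [NormedSpace ℝ F]

lemma affine_bound (L : E →L[ℝ] F) (c : F) (x : E) (i : ℕ) (hi : 1 ≤ i) :
    ‖iteratedFDeriv ℝ i (fun x => L x + c) x‖ ≤ ‖L‖ := by
  obtain ⟨j, rfl⟩ := Nat.exists_eq_add_of_le' hi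
  rw [← norm_iteratedFDeriv_fderiv]
  have : fderiv ℝ (fun x => L x + c) = fun _ => L := by
    ext1 y; simp
  rw [this]
  cases j with
  | zero => simp
  | succ j => simp [iteratedFDeriv_succ_const]

lemma sub_bound (z x : E) (i : ℕ) (hi : 1 ≤ i) :
    ‖iteratedFDeriv ℝ i (fun x : E => x - z) x‖ ≤ 1 := by
  have := affine_bound (ContinuousLinearMap.id ℝ E) (-z) x i hi
  simp only [ContinuousLinearMap.coe_id', id, ← sub_eq_add_neg] at this
  exact this.trans ContinuousLinearMap.norm_id_le

/-- derivatives of multilinear maps along affine maps -/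
lemma lemQ (r : ℝ) (hr : 0 < r) (j N : ℕ) : ∃ C : ℝ, 0 ≤ C ∧ ∀ (T : E [×j]→L[ℝ] ℝ)
    (S : Finset (Fin j)) (z x0 x : E), ‖z‖ ≤ r → ‖x0‖ ≤ r → ‖x‖ ≤ r → ∀ i ≤ N,
    ‖iteratedFDeriv ℝ i (fun y => T (fun k => if k ∈ S then y - z else z - x0)) x‖ ≤ C * ‖T‖ := by
  refine ⟨N ! * ((j + 1) ^ N * (2 * r + 1) ^ j), by positivity, ?_⟩
  intro T S z x0 x hz hx0 hx i hi
  set L : E →L[ℝ] (Fin j → E) := ContinuousLinearMap.pi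
    (fun k => if k ∈ S then ContinuousLinearMap.id ℝ E else 0) with hL
  set c : Fin j → E := fun k => if k ∈ S then - z else z - x0 with hc
  have e : ∀ y : E, (fun k => if k ∈ S then y - z else z - x0) = L y + c := by
    intro y; ext k
    by_cases h : k ∈ S <;> simp [hL, hc, h, sub_eq_add_neg]
  have hLn : ‖L‖ ≤ 1 := by
    refine ContinuousLinearMap.opNorm_le_bound _ zero_le_one (fun y => ?_)
    rw [pi_norm_le_iff_of_nonneg (by positivity)]
    intro k
    by_cases h : k ∈ S <;> simp [hL, h]
  have hnorm : ‖L x + c‖ ≤ 2 * r + 1 := by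
    rw [← e, pi_norm_le_iff_of_nonneg (by positivity)]
    intro k
    have h1 := norm_sub_le x z
    have h2 := norm_sub_le z x0
    split_ifs <;> linarith
  have h := comp_le (g := fun v => T v) (f := fun y => L y + c) (x := x) (n := i)
    (C := (j + 1) ^ N * (2 * r + 1) ^ j * ‖T‖) (D := 1)
    (T.contDiff.contDiffAt) (by fun_prop) ?_ ?_
  · simp_rw [e]
    refine h.trans ?_
    have : (i ! : ℝ) ≤ N ! := by exact_mod_cast Nat.factorial_le hi
    rw [one_pow, mul_one, ← mul_assoc]
    refine le_trans ?_ (le_of_eq (by ring : (N ! : ℝ) * ((j + 1) ^ N * (2 * r + 1) ^ j * ‖T‖) = _))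
    calc _ = (i ! : ℝ) * ((j + 1) ^ N * (2 * r + 1) ^ j * ‖T‖) := by ring
      _ ≤ _ := by gcongr
  · intro k hk
    refine (ContinuousMultilinearMap.norm_iteratedFDeriv_le T k _).trans ?_
    rw [Fintype.card_fin]
    have h1 : ((j.descFactorial k : ℕ) : ℝ) ≤ (j + 1) ^ N := by
      have a1 := Nat.descFactorial_le_pow j k
      have a2 : j ^ k ≤ (j + 1) ^ k := Nat.pow_le_pow_left (by omega) k
      have a3 : (j + 1) ^ k ≤ (j + 1) ^ N := Nat.pow_le_pow_right (by omega) (hk.trans hi)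
      exact_mod_cast (a1.trans a2).trans a3
    have h2 : ‖L x + c‖ ^ (j - k) ≤ (2 * r + 1) ^ j := by
      calc _ ≤ (2 * r + 1) ^ (j - k) := by gcongr
        _ ≤ _ := pow_le_pow_right₀ (by linarith) (Nat.sub_le _ _)
    calc _ ≤ ((j:ℝ) + 1) ^ N * ‖T‖ * (2 * r + 1) ^ j := by gcongr
      _ = _ := by ring
  · intro k h1 _
    rw [one_pow]
    exact (affine_bound L c x k h1).trans hLn

lemma taylorP_bound (r : ℝ) (hr : 0 < r) (n N : ℕ) : ∃ C : ℝ, 0 ≤ C ∧ ∀ (f : E → ℝ) (x0 y : E)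
    (B : ℝ), ‖x0‖ ≤ r → ‖y‖ ≤ r → (∀ j < n, ‖iteratedFDeriv ℝ j f x0‖ ≤ B) → 0 ≤ B → ∀ i ≤ N,
    ‖iteratedFDeriv ℝ i (taylorP f x0 n) y‖ ≤ C * B := by
  choose C hC0 hC using fun j => lemQ (E := E) r hr j N
  refine ⟨∑ j ∈ Finset.range n, C j, Finset.sum_nonneg fun j _ => hC0 j, ?_⟩
  intro f x0 y B hx0 hy hB hB0 i hi
  unfold taylorP
  rw [iteratedFDeriv_fun_sum_apply]
  swap
  · intro j _
    exact ((ContinuousMultilinearMap.contDiff _).comp (by fun_prop)).contDiffAt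
  refine (norm_sum_le _ _).trans ?_
  rw [Finset.sum_mul]
  refine Finset.sum_le_sum fun j hj => ?_
  have := hC j ((j ! : ℝ)⁻¹ • iteratedFDeriv ℝ j f x0) Finset.univ x0 x0 y hx0 hx0 hy i hi
  simp only [Finset.mem_univ, if_true] at this
  refine this.trans (mul_le_mul_of_nonneg_left ?_ (hC0 j))
  rw [norm_smul, norm_inv]
  have h1 : ‖(j ! : ℝ)‖⁻¹ ≤ 1 := by
    rw [Real.norm_of_nonneg (by positivity)]
    exact inv_le_one_of_one_le₀ (by exact_mod_cast Nat.one_le_iff_ne_zero.2 (Nat.factorial_ne_zero j))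
  exact (mul_le_of_le_one_left (norm_nonneg _) h1).trans (hB j (Finset.mem_range.1 hj))

end aff

section om
variable {E : Type*} [NormedAddCommGroup E] [InnerProductSpace ℝ E]

noncomputable def om (μ : ℝ) (x : E) : ℝ := Real.exp (-(μ * ‖x‖ ^ 2))

noncomputable def Ph (μ : ℝ) (z x : E) : E := z + om μ x • (x - z)

lemma om_contDiff (μ : ℝ) : ContDiff ℝ ∞ (om (E := E) μ) := by
  unfold om
  exact ((contDiff_const.mul (contDiff_norm_sq ℝ)).neg).exp

lemma om_pos (μ : ℝ) (x : E) : 0 < om μ x := Real.exp_pos _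

lemma om_le_one {μ : ℝ} (hμ : 0 ≤ μ) (x : E) : om μ x ≤ 1 :=
  Real.exp_le_one_iff.2 (by have : 0 ≤ μ * ‖x‖ ^ 2 := by positivity
                            linarith)

lemma one_sub_om_le (μ : ℝ) (x : E) : 1 - om μ x ≤ μ * ‖x‖ ^ 2 := by
  have := Real.add_one_le_exp (-(μ * ‖x‖ ^ 2))
  unfold om; linarith

lemma Ph_contDiff (μ : ℝ) (z : E) : ContDiff ℝ ∞ (Ph μ z) := by
  unfold Ph
  exact contDiff_const.add ((om_contDiff μ).smul (by fun_prop))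

lemma Ph_joint (μ : ℝ) : ContDiff ℝ ∞ (fun p : E × E => Ph μ p.2 p.1) := by
  unfold Ph
  exact contDiff_snd.add (((om_contDiff μ).comp contDiff_fst).smul (contDiff_fst.sub contDiff_snd))

lemma Ph_eq (μ : ℝ) (z x : E) : Ph μ z x = om μ x • x + (1 - om μ x) • z := by
  unfold Ph; rw [smul_sub, sub_smul, one_smul]; abel

lemma Ph_norm_le {μ : ℝ} (hμ : 0 ≤ μ) (z x : E) :
    ‖Ph μ z x‖ ≤ om μ x * ‖x‖ + (1 - om μ x) * ‖z‖ := by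
  rw [Ph_eq]
  refine (norm_add_le _ _).trans ?_
  rw [norm_smul, norm_smul, Real.norm_of_nonneg (om_pos μ x).le,
    Real.norm_of_nonneg (sub_nonneg.2 (om_le_one hμ x))]

lemma Ph_lt {μ r : ℝ} (hμ : 0 ≤ μ) {z x : E} (hz : ‖z‖ < r) (hx : ‖x‖ < r) : ‖Ph μ z x‖ < r := by
  refine (Ph_norm_le hμ z x).trans_lt ?_
  have h1 := om_pos μ x
  have h2 := om_le_one hμ x
  nlinarith [mul_lt_mul_of_pos_left hx h1, mul_le_mul_of_nonneg_left hz.le (sub_nonneg.2 h2)]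

lemma Ph_sub (μ : ℝ) (z x : E) : Ph μ z x - x = (1 - om μ x) • (z - x) := by
  rw [Ph_eq, smul_sub, sub_smul, sub_smul, one_smul, one_smul]; abel

lemma Ph_sub_le {μ r : ℝ} (hμ : 0 ≤ μ) {z x : E} (hz : ‖z‖ ≤ r) (hx : ‖x‖ ≤ r) :
    ‖Ph μ z x - x‖ ≤ (1 - om μ x) * (2 * r) := by
  rw [Ph_sub, norm_smul, Real.norm_of_nonneg (sub_nonneg.2 (om_le_one hμ x))]
  refine mul_le_mul_of_nonneg_left ?_ (sub_nonneg.2 (om_le_one hμ x))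
  exact (norm_sub_le _ _).trans (by linarith)

lemma normsq_bound {R : ℝ} (hR : 0 ≤ R) {x : E} (hx : ‖x‖ ≤ R) (i : ℕ) (hi : 1 ≤ i) :
    ‖iteratedFDeriv ℝ i (fun x : E => ‖x‖ ^ 2) x‖ ≤ (2 * (R + 1) ^ 2) ^ i := by
  have h0 : ∀ k, ‖iteratedFDeriv ℝ k (fun x : E => x) x‖ ≤ R + 1 := by
    intro k
    rcases Nat.eq_zero_or_pos k with rfl | hk
    · rw [norm_iteratedFDeriv_zero]; linarith
    · have := sub_bound (0 : E) x k hk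
      simp only [sub_zero] at this; linarith
  have h := ContinuousLinearMap.norm_iteratedFDeriv_le_of_bilinear_of_le_one (innerSL ℝ (E := E))
    (f := fun x : E => x) (g := fun x : E => x) (N := ∞) contDiff_id contDiff_id x
    (n := i) (natle i) (norm_innerSL_le ℝ)
  have e : (fun y : E => ((innerSL ℝ) y) y) = fun y => ‖y‖ ^ 2 := by
    ext y; rw [innerSL_apply_apply, real_inner_self_eq_norm_sq]
  rw [e] at h
  refine h.trans ?_
  calc _ ≤ ∑ k ∈ Finset.range (i + 1), (i.choose k : ℝ) * ((R + 1) * (R + 1)) := by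
        refine Finset.sum_le_sum fun k _ => ?_
        rw [mul_assoc]
        refine mul_le_mul_of_nonneg_left ?_ (by positivity)
        exact mul_le_mul (h0 _) (h0 _) (norm_nonneg _) (by positivity)
    _ = 2 ^ i * (R + 1) ^ 2 := by
        rw [← Finset.sum_mul]
        have h2 : (∑ k ∈ Finset.range (i + 1), (i.choose k : ℝ)) = 2 ^ i := by
          exact_mod_cast Nat.sum_range_choose i
        rw [h2]; ring
    _ ≤ 2 ^ i * ((R + 1) ^ 2) ^ i := by
        gcongr
        exact le_self_pow₀ (one_le_pow₀ (by linarith)) (by omega)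
    _ = _ := by rw [mul_pow]

lemma om_bound (r : ℝ) (hr : 0 < r) (N : ℕ) : ∃ C : ℝ, 1 ≤ C ∧ ∀ (lam μ : ℝ) (x : E), 1 ≤ lam →
    0 ≤ μ → μ ≤ lam → ‖x‖ ≤ r → ∀ i ≤ N, ‖iteratedFDeriv ℝ i (om μ) x‖ ≤ (C * lam) ^ i := by
  have hA : (1:ℝ) ≤ 2 * (r + 1) ^ 2 := by nlinarith
  have hf : (1:ℝ) ≤ N ! := by exact_mod_cast Nat.one_le_iff_ne_zero.2 (Nat.factorial_ne_zero N)
  refine ⟨N ! * (2 * (r + 1) ^ 2), by nlinarith, ?_⟩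
  intro lam μ x hl hμ hμl hx i hi
  have h := comp_le (g := Real.exp) (f := fun x : E => -(μ * ‖x‖ ^ 2)) (x := x) (n := i) (C := 1)
    (D := 2 * (r + 1) ^ 2 * lam) Real.contDiff_exp.contDiffAt
    ((contDiff_const.mul (contDiff_norm_sq ℝ)).neg).contDiffAt ?_ ?_
  · change ‖iteratedFDeriv ℝ i (fun x : E => Real.exp (-(μ * ‖x‖ ^ 2))) x‖ ≤ _
    refine h.trans ?_
    rw [mul_one, mul_assoc (N ! : ℝ), mul_pow (N ! : ℝ)]
    refine mul_le_mul_of_nonneg_right ?_ (by positivity)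
    rcases Nat.eq_zero_or_pos i with rfl | hi0
    · simp
    · refine le_trans (b := (N ! : ℝ)) (by exact_mod_cast Nat.factorial_le hi) ?_
      exact le_self_pow₀ hf (by omega)
  · intro k _
    rw [norm_iteratedFDeriv_eq_norm_iteratedDeriv, iteratedDeriv_eq_iterate, Real.iter_deriv_exp]
    rw [Real.norm_of_nonneg (Real.exp_pos _).le]
    exact om_le_one hμ x
  · intro k hk _
    have e : (fun x : E => -(μ * ‖x‖ ^ 2)) = (-μ) • (fun x : E => ‖x‖ ^ 2) := by
      ext y; simp
    rw [e, iteratedFDeriv_const_smul_apply (contDiff_norm_sq ℝ).contDiffAt, norm_smul, norm_neg,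
      Real.norm_of_nonneg hμ, mul_pow, mul_comm]
    have h1 := normsq_bound hr.le hx k hk
    have h2 : μ ≤ lam ^ k := hμl.trans (le_self_pow₀ hl (by omega))
    exact mul_le_mul h1 h2 hμ (by positivity)

lemma smul_sub_bound (r : ℝ) (hr : 0 < r) (N : ℕ) : ∃ C : ℝ, 1 ≤ C ∧ ∀ (lam μ : ℝ) (z x : E),
    1 ≤ lam → 0 ≤ μ → μ ≤ lam → ‖z‖ ≤ r → ‖x‖ ≤ r → ∀ i ≤ N, 1 ≤ i →
    ‖iteratedFDeriv ℝ i (fun x => om μ x • (x - z)) x‖ ≤ (C * lam) ^ i := by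
  obtain ⟨C, hC1, hC⟩ := om_bound (E := E) r hr N
  refine ⟨2 * (2 * r + 1) * C, by nlinarith, ?_⟩
  intro lam μ z x hl hμ hμl hz hx i hi hi1
  have hCl : 1 ≤ C * lam := one_le_mul_of_one_le_of_one_le hC1 hl
  have := smul_le (f := om μ) (g := fun x => x - z) (x := x) (n := i) (A := 1) (B := 2 * r + 1)
    (M := C * lam) ((om_contDiff μ).of_le (natle i)).contDiffAt (by fun_prop) zero_le_one (by linarith)
    (fun k hk => by rw [one_mul]; exact hC lam μ x hl hμ hμl hx k (hk.trans hi)) ?_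
  · refine this.trans ?_
    have e : (2 * (2 * r + 1) * C * lam) ^ i = 2 ^ i * (2 * r + 1) ^ i * (C * lam) ^ i := by
      rw [← mul_pow, ← mul_pow]; ring
    rw [mul_one, e]
    gcongr
    exact le_self_pow₀ (by linarith) (by omega)
  · intro k _
    have h1 : (1:ℝ) ≤ (C * lam) ^ k := one_le_pow₀ hCl
    rcases Nat.eq_zero_or_pos k with rfl | hk
    · rw [norm_iteratedFDeriv_zero]
      have := norm_sub_le x z
      simp; linarith
    · have := sub_bound z x k hk
      nlinarith

lemma Ph_bound (r : ℝ) (hr : 0 < r) (N : ℕ) : ∃ C : ℝ, 1 ≤ C ∧ ∀ (lam μ : ℝ) (z x : E),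
    1 ≤ lam → 0 ≤ μ → μ ≤ lam → ‖z‖ ≤ r → ‖x‖ ≤ r → ∀ i ≤ N, 1 ≤ i →
    ‖iteratedFDeriv ℝ i (Ph μ z) x‖ ≤ (C * lam) ^ i := by
  obtain ⟨C, hC1, hC⟩ := smul_sub_bound (E := E) r hr N
  refine ⟨C, hC1, ?_⟩
  intro lam μ z x hl hμ hμl hz hx i hi hi1
  have h := hC lam μ z x hl hμ hμl hz hx i hi hi1
  have e : iteratedFDeriv ℝ i (Ph μ z) x = iteratedFDeriv ℝ i (fun x => om μ x • (x - z)) x := by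
    unfold Ph
    have hs : ContDiff ℝ i (fun x => om μ x • (x - z)) :=
      ((om_contDiff μ).of_le (natle i)).smul (by fun_prop)
    rw [fun_iteratedFDeriv_add_apply contDiff_const.contDiffAt hs.contDiffAt,
      iteratedFDeriv_const_of_ne (by omega)]
    simp
  rw [e]; exact h

/-- composition bound -/
lemma comp_Ph_bound (r : ℝ) (hr : 0 < r) (N : ℕ) : ∃ C : ℝ, 1 ≤ C ∧ ∀ (lam μ : ℝ) (z x : E)
    (f : E → ℝ) (B : ℝ),
    1 ≤ lam → 0 ≤ μ → μ ≤ lam → ‖z‖ ≤ r → ‖x‖ ≤ r → ContDiffAt ℝ ∞ f (Ph μ z x) → ∀ i ≤ N,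
    (∀ j ≤ i, ‖iteratedFDeriv ℝ j f (Ph μ z x)‖ ≤ B) →
    ‖iteratedFDeriv ℝ i (fun y => f (Ph μ z y)) x‖ ≤ C * lam ^ N * B := by
  obtain ⟨C, hC1, hC⟩ := Ph_bound (E := E) r hr N
  have hf : (1:ℝ) ≤ N ! := by exact_mod_cast Nat.one_le_iff_ne_zero.2 (Nat.factorial_ne_zero N)
  refine ⟨N ! * C ^ N, one_le_mul_of_one_le_of_one_le hf (one_le_pow₀ hC1), ?_⟩
  intro lam μ z x f B hl hμ hμl hz hx hfc i hi hB
  have hB0 : 0 ≤ B := (norm_nonneg _).trans (hB 0 (Nat.zero_le _))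
  have := comp_le (g := f) (f := Ph μ z) (x := x) (n := i) (C := B) (D := C * lam)
    (hfc.of_le (natle i)) ((Ph_contDiff μ z).of_le (natle i)).contDiffAt hB
    (fun k h1 h2 => hC lam μ z x hl hμ hμl hz hx k (h2.trans hi) h1)
  refine this.trans ?_
  calc _ ≤ (N ! : ℝ) * B * (C * lam) ^ N := by
        gcongr
        · exact one_le_mul_of_one_le_of_one_le hC1 hl
    _ = _ := by rw [mul_pow]; ring

end om
end FS


namespace FS
open Filter Topology MeasureTheory
open scoped ContDiff Nat

section gen
variable {E F : Type*} [NormedAddCommGroup E] [NormedSpace ℝ E]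
  [NormedAddCommGroup F] [NormedSpace ℝ F]

lemma const_add_smul_norm {f : E → F} {x : E} {i : ℕ} (hf : ContDiffAt ℝ i f x) (c : F) (a : ℝ)
    (hi : 1 ≤ i) :
    ‖iteratedFDeriv ℝ i (fun x => c + a • f x) x‖ = |a| * ‖iteratedFDeriv ℝ i f x‖ := by
  rw [fun_iteratedFDeriv_add_apply contDiff_const.contDiffAt (hf.const_smul a),
    iteratedFDeriv_const_of_ne (by omega)]
  have : iteratedFDeriv ℝ i (fun x => a • f x) x = a • iteratedFDeriv ℝ i f x :=
    iteratedFDeriv_const_smul_apply' hf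
  rw [this]
  simp [norm_smul]

lemma smul_norm {f : E → F} {x : E} {i : ℕ} (hf : ContDiffAt ℝ i f x) (a : ℝ) :
    ‖iteratedFDeriv ℝ i (fun x => a • f x) x‖ = |a| * ‖iteratedFDeriv ℝ i f x‖ := by
  have : iteratedFDeriv ℝ i (fun x => a • f x) x = a • iteratedFDeriv ℝ i f x :=
    iteratedFDeriv_const_smul_apply' hf
  rw [this, norm_smul, Real.norm_eq_abs]

lemma exists_bound_one (h : ℝ → ℝ) (N : ℕ) : ∃ c : ℝ, 1 ≤ c ∧ ∀ i ≤ N,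
    ‖iteratedFDeriv ℝ i h 1‖ ≤ c := by
  refine ⟨1 + ∑ i ∈ Finset.range (N + 1), ‖iteratedFDeriv ℝ i h 1‖, ?_, ?_⟩
  · have : 0 ≤ ∑ i ∈ Finset.range (N + 1), ‖iteratedFDeriv ℝ i h 1‖ :=
      Finset.sum_nonneg fun _ _ => norm_nonneg _
    linarith
  · intro i hi
    have := Finset.single_le_sum (f := fun i => ‖iteratedFDeriv ℝ i h 1‖)
      (fun _ _ => norm_nonneg _) (Finset.mem_range.2 (Nat.lt_succ_of_le hi))
    linarith

lemma exists_bound_bump [FiniteDimensional ℝ E] {rho : E → ℝ} (hs : ContDiff ℝ ∞ rho)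
    (hc : HasCompactSupport rho) (N : ℕ) :
    ∃ c : ℝ, 1 ≤ c ∧ ∀ i ≤ N, ∀ x, ‖iteratedFDeriv ℝ i rho x‖ ≤ c := by
  have : ∀ i : ℕ, ∃ c : ℝ, 0 ≤ c ∧ ∀ x, ‖iteratedFDeriv ℝ i rho x‖ ≤ c := by
    intro i
    obtain ⟨c, hc⟩ := (hc.iteratedFDeriv i).exists_bound_of_continuous
      (hs.continuous_iteratedFDeriv (m := i) (natle i))
    exact ⟨c, (norm_nonneg _).trans (hc 0), hc⟩
  choose c hc0 hc using this
  refine ⟨1 + ∑ i ∈ Finset.range (N + 1), c i, ?_, ?_⟩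
  · have : 0 ≤ ∑ i ∈ Finset.range (N + 1), c i := Finset.sum_nonneg fun i _ => hc0 i
    linarith
  · intro i hi x
    have := Finset.single_le_sum (f := c)
      (fun i _ => hc0 i) (Finset.mem_range.2 (Nat.lt_succ_of_le hi))
    linarith [hc i x]

end gen

section ker
variable {E : Type*} [NormedAddCommGroup E] [InnerProductSpace ℝ E]

noncomputable def qf (μ : ℝ) (x0 x : E) : ℝ := (1 - om μ x0)⁻¹ * (1 - om μ x)

noncomputable def uf (μ : ℝ) (x0 z x : E) : E :=
  z + (1 - om μ x0)⁻¹ • (om μ x0 • x0 - om μ x • x)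

noncomputable def amp (rho : E → ℝ) (d : ℕ) (μ : ℝ) (x0 z x : E) : ℝ :=
  ((qf μ x0 x)⁻¹) ^ d * rho ((qf μ x0 x)⁻¹ • uf μ x0 z x)

lemma om_lt_one {μ : ℝ} (hμ : 0 < μ) {x : E} (hx : x ≠ 0) : om μ x < 1 := by
  have : 0 < ‖x‖ := norm_pos_iff.2 hx
  have : 0 < μ * ‖x‖ ^ 2 := by positivity
  exact Real.exp_lt_one_iff.2 (by linarith)

lemma comp_q_bound (r : ℝ) (hr : 0 < r) (N : ℕ) : ∃ C : ℝ, 1 ≤ C ∧ ∀ (lam μ : ℝ) (x0 z : E),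
    1 ≤ lam → 0 < μ → μ ≤ lam → x0 ≠ 0 → ‖x0‖ ≤ r → ‖z‖ ≤ r →
    (∀ i ≤ N, 1 ≤ i → ‖iteratedFDeriv ℝ i (qf μ x0) x0‖ ≤ (C * (lam / (1 - om μ x0))) ^ i) ∧
    (∀ i ≤ N, ‖iteratedFDeriv ℝ i (uf μ x0 z) x0‖ ≤ (r + 1) * (C * (lam / (1 - om μ x0))) ^ i) := by
  obtain ⟨C1, hC1, hC⟩ := om_bound (E := E) r hr N
  obtain ⟨C2, hC2, hC'⟩ := smul_sub_bound (E := E) r hr N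
  refine ⟨max C1 C2, le_max_of_le_left hC1, ?_⟩
  intro lam μ x0 z hl hμ hμl hx0 hxr hz
  have hs : 0 < 1 - om μ x0 := sub_pos.2 (om_lt_one hμ hx0)
  have hs1 : 1 ≤ (1 - om μ x0)⁻¹ := (one_le_inv₀ hs).2 (by linarith [om_pos μ x0])
  have key : ∀ i, 1 ≤ i → ∀ C', 1 ≤ C' → C' ≤ max C1 C2 →
      |(1 - om μ x0)⁻¹| * (C' * lam) ^ i ≤ (max C1 C2 * (lam / (1 - om μ x0))) ^ i := by
    intro i hi C' h1 hm
    rw [abs_of_pos (inv_pos.2 hs), div_eq_mul_inv, ← mul_assoc, mul_pow (max C1 C2 * lam), mul_comm]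
    have k1 : (1 - om μ x0)⁻¹ ≤ (1 - om μ x0)⁻¹ ^ i := le_self_pow₀ hs1 (by omega)
    have k2 : (C' * lam) ^ i ≤ (max C1 C2 * lam) ^ i := by gcongr
    exact mul_le_mul k2 k1 (by positivity) (by positivity)
  constructor
  · intro i hi h1
    have e : qf μ x0 = fun x => (1 - om μ x0)⁻¹ + (-(1 - om μ x0)⁻¹) • om μ x := by
      ext x; simp only [qf, smul_eq_mul]; ring
    rw [e, const_add_smul_norm ((om_contDiff μ).of_le (natle i)).contDiffAt _ _ h1, abs_neg]
    refine le_trans ?_ (key i h1 C1 hC1 (le_max_left _ _))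
    gcongr
    exact hC lam μ x0 hl hμ.le hμl hxr i hi
  · intro i hi
    rcases Nat.eq_zero_or_pos i with rfl | h1
    · simp [uf]; linarith
    · have e : uf μ x0 z = fun x => (z + (1 - om μ x0)⁻¹ • (om μ x0 • x0)) +
          (-(1 - om μ x0)⁻¹) • (om μ x • (x - 0)) := by
        ext x; simp only [uf, smul_sub, neg_smul, sub_zero]; abel
      have hcd : ContDiff ℝ i (fun x : E => om μ x • (x - 0)) :=
        ((om_contDiff μ).of_le (natle i)).smul (by fun_prop)
      rw [e, const_add_smul_norm hcd.contDiffAt _ _ h1, abs_neg]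
      have h2 : |(1 - om μ x0)⁻¹| * ‖iteratedFDeriv ℝ i (fun x : E => om μ x • (x - 0)) x0‖
          ≤ (max C1 C2 * (lam / (1 - om μ x0))) ^ i := by
        refine le_trans ?_ (key i h1 C2 hC2 (le_max_right _ _))
        gcongr
        exact hC' lam μ 0 x0 hl hμ.le hμl (by simp [hr.le]) hxr i hi h1
      refine h2.trans (le_mul_of_one_le_left ?_ (by linarith))
      have := le_max_of_le_left (b := C1) (c := C2) hC1
      positivity

lemma qf_self {μ : ℝ} (hμ : 0 < μ) {x0 : E} (hx0 : x0 ≠ 0) : qf μ x0 x0 = 1 :=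
  inv_mul_cancel₀ (sub_pos.2 (om_lt_one hμ hx0)).ne'

lemma qf_contDiff (μ : ℝ) (x0 : E) : ContDiff ℝ ∞ (qf μ x0) := by
  unfold qf
  exact contDiff_const.mul (contDiff_const.sub (om_contDiff μ))

lemma uf_contDiff (μ : ℝ) (x0 z : E) : ContDiff ℝ ∞ (uf μ x0 z) := by
  unfold uf
  exact contDiff_const.add (contDiff_const.smul (contDiff_const.sub ((om_contDiff μ).smul contDiff_id)))

lemma amp_bound [FiniteDimensional ℝ E] {rho : E → ℝ} (hs : ContDiff ℝ ∞ rho)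
    (hc : HasCompactSupport rho) (r : ℝ) (hr : 0 < r) (d N : ℕ) :
    ∃ C : ℝ, 0 ≤ C ∧ ∀ (lam μ : ℝ) (x0 z : E),
    1 ≤ lam → 0 < μ → μ ≤ lam → x0 ≠ 0 → ‖x0‖ ≤ r → ‖z‖ ≤ r →
    ‖iteratedFDeriv ℝ N (amp rho d μ x0 z) x0‖ ≤ C * (lam / (1 - om μ x0)) ^ N := by
  obtain ⟨C, hC1, hC⟩ := comp_q_bound (E := E) r hr N
  obtain ⟨c1, hc1, hcb1⟩ := exists_bound_one (fun s => s⁻¹) N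
  obtain ⟨c2, hc2, hcb2⟩ := exists_bound_one (fun s => (s⁻¹) ^ d) N
  obtain ⟨c3, hc3, hcb3⟩ := exists_bound_bump hs hc N
  have hf : (1:ℝ) ≤ N ! := by exact_mod_cast Nat.one_le_iff_ne_zero.2 (Nat.factorial_ne_zero N)
  set C2 := 2 * (N ! * c1) * (r + 1) with hC2
  have hNc : 1 ≤ N ! * c1 := one_le_mul_of_one_le_of_one_le hf hc1
  have hC21 : 1 ≤ C2 := by
    have : 1 ≤ (N ! * c1) * (r + 1) := one_le_mul_of_one_le_of_one_le hNc (by linarith)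
    rw [hC2]; linarith
  refine ⟨2 ^ N * (N ! * c2) * (N ! * c3) * (C2 * C) ^ N, by positivity, ?_⟩
  intro lam μ x0 z hl hμ hμl hx0 hxr hz
  obtain ⟨hq, hu⟩ := hC lam μ x0 z hl hμ hμl hx0 hxr hz
  have hs0 : 0 < 1 - om μ x0 := sub_pos.2 (om_lt_one hμ hx0)
  set M := C * (lam / (1 - om μ x0)) with hM
  have hM1 : 1 ≤ M := one_le_mul_of_one_le_of_one_le hC1
    ((one_le_div₀ hs0).2 (by linarith [om_pos μ x0]))
  have hq1 := qf_self hμ hx0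
  have fac : ∀ i ≤ N, (i ! : ℝ) ≤ N ! := fun i hi => by exact_mod_cast Nat.factorial_le hi
  have hcomp : ∀ (h : ℝ → ℝ) (c : ℝ), 1 ≤ c → ContDiffAt ℝ ∞ h 1 →
      (∀ i ≤ N, ‖iteratedFDeriv ℝ i h 1‖ ≤ c) → ∀ i ≤ N,
      ‖iteratedFDeriv ℝ i (fun x => h (qf μ x0 x)) x0‖ ≤ N ! * c * M ^ i := by
    intro h c hc hcd hb i hi
    have := comp_le (g := h) (f := qf μ x0) (x := x0) (n := i) (C := c) (D := M)
      (by rw [hq1]; exact hcd.of_le (natle i)) ((qf_contDiff μ x0).of_le (natle i)).contDiffAt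
      (fun j hj => by rw [hq1]; exact hb j (hj.trans hi)) (fun j h1 h2 => hq j (h2.trans hi) h1)
    refine this.trans ?_
    gcongr
  have hinv : ContDiffAt ℝ ∞ (fun s : ℝ => s⁻¹) 1 := contDiffAt_inv ℝ one_ne_zero
  have b1 := hcomp (fun s => s⁻¹) c1 hc1 hinv hcb1
  have b2 := hcomp (fun s => (s⁻¹) ^ d) c2 hc2 (hinv.pow d) hcb2
  have cq : ContDiffAt ℝ ∞ (fun x => (qf μ x0 x)⁻¹) x0 :=
    (qf_contDiff μ x0).contDiffAt.inv (by rw [hq1]; exact one_ne_zero)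
  have cw : ContDiffAt ℝ ∞ (fun x => (qf μ x0 x)⁻¹ • uf μ x0 z x) x0 :=
    cq.smul (uf_contDiff μ x0 z).contDiffAt
  have b3 : ∀ i ≤ N, 1 ≤ i → ‖iteratedFDeriv ℝ i (fun x => (qf μ x0 x)⁻¹ • uf μ x0 z x) x0‖
      ≤ (C2 * M) ^ i := by
    intro i hi h1
    have := smul_le (n := i) (cq.of_le (natle i)) ((uf_contDiff μ x0 z).of_le (natle i)).contDiffAt
      (A := N ! * c1) (B := r + 1) (M := M) (by positivity) (by positivity)
      (fun j hj => b1 j (hj.trans hi)) (fun j hj => hu j (hj.trans hi))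
    refine this.trans ?_
    have e : (C2 * M) ^ i = 2 ^ i * (N ! * c1) ^ i * (r + 1) ^ i * M ^ i := by
      rw [hC2, mul_pow, mul_pow, mul_pow 2]
    rw [e]
    have k1 : (N ! * c1) ≤ (N ! * c1) ^ i := le_self_pow₀ hNc (by omega)
    have k2 : (r + 1) ≤ (r + 1) ^ i := le_self_pow₀ (by linarith) (by omega)
    gcongr
  have hCM : 1 ≤ C2 := hC21
  have b4 : ∀ i ≤ N, ‖iteratedFDeriv ℝ i (fun x => rho ((qf μ x0 x)⁻¹ • uf μ x0 z x)) x0‖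
      ≤ N ! * c3 * (C2 * M) ^ i := by
    intro i hi
    have := comp_le (g := rho) (n := i) (C := c3) (D := C2 * M) (hs.of_le (natle i)).contDiffAt
      (cw.of_le (natle i)) (fun j hj => hcb3 j (hj.trans hi) _) (fun j h1 h2 => b3 j (h2.trans hi) h1)
    refine this.trans ?_
    gcongr
  have b5 := smul_le (n := N) (A := N ! * c2) (B := N ! * c3) (M := C2 * M)
    ((cq.pow d).of_le (natle N)) ((hs.contDiffAt.comp x0 cw).of_le (natle N)) (by positivity)
    (by positivity) (fun i hi => (b2 i hi).trans (by
      gcongr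
      exact le_mul_of_one_le_left (by positivity) hC21)) b4
  refine b5.trans (le_of_eq ?_)
  rw [hM, ← mul_assoc C2 C, mul_pow (C2 * C)]; ring

end ker

lemma cov {E : Type*} [NormedAddCommGroup E] [NormedSpace ℝ E] [FiniteDimensional ℝ E]
    [MeasurableSpace E] [BorelSpace E] (ν : Measure E) [ν.IsAddHaarMeasure] (F : E → ℝ) (e : E) {c : ℝ} (hc : 0 < c) :
    ∫ z, F z ∂ν = ∫ z, c ^ (Module.finrank ℝ E) * F (c • z + e) ∂ν := by
  have h1 := Measure.integral_comp_smul ν (fun y => F (y + e)) c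
  rw [integral_const_mul, h1, integral_add_right_eq_self F e, abs_of_pos (by positivity), smul_eq_mul,
    mul_inv_cancel_left₀ (by positivity)]

section kernel
variable {E : Type*} [NormedAddCommGroup E] [InnerProductSpace ℝ E] [FiniteDimensional ℝ E]
  [MeasurableSpace E] [BorelSpace E] (ν : Measure E) [ν.IsAddHaarMeasure]

noncomputable def AA (r : ℝ) (rho : E → ℝ) (μ : ℝ) (g : E → ℝ) (x : E) : ℝ :=
  ∫ z in closedBall 0 (3 * r / 4), rho z * g (Ph μ z x) ∂ν

lemma kernel_eq {r : ℝ} (hr : 0 < r) {rho : E → ℝ} (hsupp : ∀ z, r / 2 ≤ ‖z‖ → rho z = 0)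
    {μ : ℝ} (hμ : 0 < μ) {x0 : E} (hx0 : x0 ≠ 0) (g : E → ℝ) :
    AA ν r rho μ g =ᶠ[𝓝 x0] fun x => ∫ z in closedBall 0 (3 * r / 4),
      amp rho (Module.finrank ℝ E) μ x0 z x * g (Ph μ z x0) ∂ν := by
  have hs0 : 0 < 1 - om μ x0 := sub_pos.2 (om_lt_one hμ hx0)
  have hq1 := qf_self hμ hx0
  have hcont : ContinuousAt (fun x => (qf μ x0 x)⁻¹ * (3 * r / 4) - ‖(qf μ x0 x)⁻¹ • uf μ x0 0 x‖) x0 := by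
    have h1 : ContinuousAt (fun x => (qf μ x0 x)⁻¹) x0 :=
      (qf_contDiff μ x0).continuous.continuousAt.inv₀ (by rw [hq1]; exact one_ne_zero)
    have h2 : ContinuousAt (uf μ x0 0) x0 := (uf_contDiff μ x0 0).continuous.continuousAt
    exact (h1.mul continuousAt_const).sub (h1.smul h2).norm
  have hval : r / 2 < (qf μ x0 x0)⁻¹ * (3 * r / 4) - ‖(qf μ x0 x0)⁻¹ • uf μ x0 0 x0‖ := by
    simp [hq1, uf]; linarith
  filter_upwards [hcont.eventually (lt_mem_nhds hval), isOpen_compl_singleton.mem_nhds hx0]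
    with x hx hxne
  have hsx : 0 < 1 - om μ x := sub_pos.2 (om_lt_one hμ hxne)
  have hqpos : 0 < qf μ x0 x := mul_pos (inv_pos.2 hs0) hsx
  have hsplit : ∀ z, (qf μ x0 x)⁻¹ • uf μ x0 z x = (qf μ x0 x)⁻¹ • z + (qf μ x0 x)⁻¹ • uf μ x0 0 x := by
    intro z; simp [uf]
  unfold AA
  rw [setIntegral_eq_integral_of_forall_compl_eq_zero, cov ν _ ((qf μ x0 x)⁻¹ • uf μ x0 0 x)
    (inv_pos.2 hqpos), setIntegral_eq_integral_of_forall_compl_eq_zero]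
  · congr 1; ext z
    have e1 : (1 - om μ x) * (qf μ x0 x)⁻¹ = 1 - om μ x0 := by
      unfold qf; field_simp
    have e2 : Ph μ ((qf μ x0 x)⁻¹ • z + (qf μ x0 x)⁻¹ • uf μ x0 0 x) x = Ph μ z x0 := by
      rw [← hsplit z, Ph_eq, Ph_eq, smul_smul, e1, uf, smul_add, smul_smul, mul_inv_cancel₀ hs0.ne',
        one_smul]
      abel
    rw [amp, hsplit z, e2, ← mul_assoc]
  · intro z hz
    rw [amp, hsupp, mul_zero, zero_mul]
    have hz' : 3 * r / 4 < ‖z‖ := by simpa using hz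
    rw [hsplit]
    have h1 := norm_sub_norm_le ((qf μ x0 x)⁻¹ • z) (-((qf μ x0 x)⁻¹ • uf μ x0 0 x))
    rw [norm_neg, sub_neg_eq_add, norm_smul, Real.norm_of_nonneg (inv_pos.2 hqpos).le] at h1
    have h2 := mul_le_mul_of_nonneg_left hz'.le (inv_pos.2 hqpos).le
    linarith
  · intro z hz
    have hz' : 3 * r / 4 < ‖z‖ := by simpa using hz
    rw [hsupp _ (by linarith), zero_mul]

lemma amp_joint {rho : E → ℝ} (hs : ContDiff ℝ ∞ rho) (d : ℕ) {μ : ℝ} (hμ : 0 < μ) {x0 : E}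
    (hx0 : x0 ≠ 0) (V : Set E) :
    ContDiffOn ℝ ∞ (fun p : E × E => amp rho d μ x0 p.2 p.1) ({0}ᶜ ×ˢ V) := by
  have hs0 : 0 < 1 - om μ x0 := sub_pos.2 (om_lt_one hμ hx0)
  have h1 : ContDiffOn ℝ ∞ (fun p : E × E => (qf μ x0 p.1)⁻¹) ({0}ᶜ ×ˢ V) := by
    refine ((qf_contDiff μ x0).comp contDiff_fst).contDiffOn.inv ?_
    rintro ⟨x, z⟩ ⟨hx, _⟩
    exact (mul_pos (inv_pos.2 hs0) (sub_pos.2 (om_lt_one hμ hx))).ne'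
  have h2 : ContDiff ℝ ∞ (fun p : E × E => uf μ x0 p.2 p.1) := by
    unfold uf
    exact contDiff_snd.add (contDiff_const.smul (contDiff_const.sub
      (((om_contDiff μ).comp contDiff_fst).smul contDiff_fst)))
  unfold amp
  exact (h1.pow d).mul (hs.comp_contDiffOn (h1.smul h2.contDiffOn))

lemma kernel_bound {rho : E → ℝ} (hs : ContDiff ℝ ∞ rho) (hc : HasCompactSupport rho)
    {r : ℝ} (hr : 0 < r) (hsupp : ∀ z, r / 2 ≤ ‖z‖ → rho z = 0) (N : ℕ) :
    ∃ C : ℝ, 0 ≤ C ∧ ∀ (lam μ : ℝ) (x0 : E) (g : E → ℝ) (B : ℝ),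
    1 ≤ lam → 0 < μ → μ ≤ lam → x0 ≠ 0 → ‖x0‖ < r → ContDiffOn ℝ ∞ g (ball 0 r) →
    (∀ z, ‖z‖ ≤ 3 * r / 4 → |g (Ph μ z x0)| ≤ B) →
    ‖iteratedFDeriv ℝ N (AA ν r rho μ g) x0‖ ≤ C * (lam / (1 - om μ x0)) ^ N * B := by
  obtain ⟨C, hC0, hC⟩ := amp_bound hs hc r hr (Module.finrank ℝ E) N
  set K := closedBall (0 : E) (3 * r / 4) with hK
  refine ⟨C * ν.real K, by positivity, ?_⟩
  intro lam μ x0 g B hl hμ hμl hx0 hxr hg hB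
  have hs0 : 0 < 1 - om μ x0 := sub_pos.2 (om_lt_one hμ hx0)
  rw [(kernel_eq ν hr hsupp hμ hx0 g).iteratedFDeriv ℝ N |>.self_of_nhds]
  have hKV : K ⊆ ball 0 r := closedBall_subset_ball (by linarith)
  have hg0 : ContDiffOn ℝ ∞ (fun p : E × E => g (Ph μ p.2 x0)) ({0}ᶜ ×ˢ ball 0 r) := by
    refine hg.comp ?_ ?_
    · have : ContDiff ℝ ∞ (fun p : E × E => Ph μ p.2 x0) :=
        (Ph_joint μ).comp (f := fun p : E × E => (x0, p.2)) (by fun_prop)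
      exact this.contDiffOn
    · rintro ⟨x, z⟩ ⟨_, hz⟩
      exact mem_ball_zero_iff.2 (Ph_lt hμ.le (mem_ball_zero_iff.1 hz) hxr)
  obtain ⟨h1, -⟩ := integral_compact_smooth ν isOpen_compl_singleton isOpen_ball
    (isCompact_closedBall 0 (3 * r / 4)) hKV
    ((amp_joint hs (Module.finrank ℝ E) hμ hx0 (ball 0 r)).mul hg0)
  rw [h1 N x0 hx0]
  have hb : ∀ z ∈ K, ‖iteratedFDeriv ℝ N (fun y => amp rho (Module.finrank ℝ E) μ x0 z y
      * g (Ph μ z x0)) x0‖ ≤ C * (lam / (1 - om μ x0)) ^ N * B := by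
    intro z hz
    have hz' : ‖z‖ ≤ 3 * r / 4 := mem_closedBall_zero_iff.1 hz
    have e : (fun y => amp rho (Module.finrank ℝ E) μ x0 z y * g (Ph μ z x0)) =
        fun y => g (Ph μ z x0) • amp rho (Module.finrank ℝ E) μ x0 z y := by
      ext y; rw [smul_eq_mul, mul_comm]
    have hcd : ContDiffAt ℝ ∞ (amp rho (Module.finrank ℝ E) μ x0 z) x0 := by
      have := (amp_joint hs (Module.finrank ℝ E) hμ hx0 univ).contDiffAt
        ((isOpen_compl_singleton.prod isOpen_univ).mem_nhds (show (x0, z) ∈ _ from ⟨hx0, trivial⟩))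
      exact this.comp (f := fun y : E => (y, z)) x0 (by fun_prop)
    rw [e, smul_norm (hcd.of_le (natle N)), mul_comm]
    have h3 := hC lam μ x0 z hl hμ hμl hx0 hxr.le (by linarith)
    exact mul_le_mul h3 (hB z hz') (abs_nonneg _) (by positivity)
  have := norm_setIntegral_le_of_norm_le_const (μ := ν)
    ((isCompact_closedBall (0:E) (3 * r / 4)).measure_lt_top) hb
  refine this.trans (le_of_eq ?_)
  rw [hK]; ring

end kernel
end FS


namespace FS
open Filter Topology MeasureTheory
open scoped ContDiff Nat

section est
variable {E : Type*} [NormedAddCommGroup E] [InnerProductSpace ℝ E] [FiniteDimensional ℝ E]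
  [MeasurableSpace E] [BorelSpace E] (ν : Measure E) [ν.IsAddHaarMeasure]

/-- `W` is mapped into the open ball by all contractions. -/
def Good (r μ : ℝ) (W : Set E) : Prop := ∀ x ∈ W, ∀ z ∈ ball (0 : E) (7 * r / 8), Ph μ z x ∈ ball (0 : E) r

lemma good_ball {r μ : ℝ} (hr : 0 < r) (hμ : 0 ≤ μ) : Good r μ (ball (0 : E) r) := by
  intro x hx z hz
  rw [mem_ball_zero_iff] at *
  exact Ph_lt hμ (by linarith) hx

lemma AA_smooth {rho : E → ℝ} (hs : ContDiff ℝ ∞ rho) {r : ℝ} (hr : 0 < r) {μ : ℝ}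
    {W : Set E} (hW : IsOpen W) (hG : Good r μ W) {f : E → ℝ} (hf : ContDiffOn ℝ ∞ f (ball 0 r)) :
    (∀ n : ℕ, ∀ x ∈ W, iteratedFDeriv ℝ n (AA ν r rho μ f) x
      = ∫ z in closedBall 0 (3 * r / 4), iteratedFDeriv ℝ n (fun y => rho z * f (Ph μ z y)) x ∂ν) ∧
    ContDiffOn ℝ ∞ (AA ν r rho μ f) W := by
  have hKV : closedBall (0 : E) (3 * r / 4) ⊆ ball 0 (7 * r / 8) :=
    closedBall_subset_ball (by linarith)
  have h : ContDiffOn ℝ ∞ (fun p : E × E => rho p.2 * f (Ph μ p.2 p.1)) (W ×ˢ ball 0 (7 * r / 8)) := by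
    refine (hs.comp contDiff_snd).contDiffOn.mul (hf.comp (Ph_joint μ).contDiffOn ?_)
    rintro ⟨x, z⟩ ⟨hx, hz⟩
    exact hG x hx z hz
  exact integral_compact_smooth ν hW isOpen_ball (isCompact_closedBall 0 (3 * r / 4)) hKV h

lemma AA_simple {rho : E → ℝ} (hs : ContDiff ℝ ∞ rho) (hc : HasCompactSupport rho)
    {r : ℝ} (hr : 0 < r) (N : ℕ) :
    ∃ C : ℝ, 0 ≤ C ∧ ∀ (lam μ : ℝ) (W : Set E) (f : E → ℝ) (x : E) (B : ℝ), 1 ≤ lam → 0 ≤ μ →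
    μ ≤ lam → IsOpen W → Good r μ W → x ∈ W → ‖x‖ ≤ 2 * r → ContDiffOn ℝ ∞ f (ball 0 r) →
    ∀ i ≤ N, (∀ z, ‖z‖ ≤ 3 * r / 4 → ∀ j ≤ i, ‖iteratedFDeriv ℝ j f (Ph μ z x)‖ ≤ B) →
    ‖iteratedFDeriv ℝ i (AA ν r rho μ f) x‖ ≤ C * lam ^ N * B := by
  obtain ⟨C, hC1, hC⟩ := comp_Ph_bound (E := E) (2 * r) (by linarith) N
  obtain ⟨c, hc1, hcb⟩ := exists_bound_bump hs hc 0
  set K := closedBall (0 : E) (3 * r / 4) with hK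
  refine ⟨c * C * ν.real K, by positivity, ?_⟩
  intro lam μ W f x B hl hμ hμl hW hG hx hxr hf i hi hB
  rw [(AA_smooth ν hs hr hW hG hf).1 i x hx]
  have hb : ∀ z ∈ K, ‖iteratedFDeriv ℝ i (fun y => rho z * f (Ph μ z y)) x‖ ≤ c * (C * lam ^ N * B) := by
    intro z hz
    have hz' : ‖z‖ ≤ 3 * r / 4 := mem_closedBall_zero_iff.1 hz
    have hfa : ContDiffAt ℝ ∞ f (Ph μ z x) := hf.contDiffAt (isOpen_ball.mem_nhds
      (hG x hx z (mem_ball_zero_iff.2 (by linarith))))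
    have hfc : ContDiffAt ℝ ∞ (fun y => f (Ph μ z y)) x :=
      hfa.comp x (Ph_contDiff μ z).contDiffAt
    have := smul_norm (hfc.of_le (natle i)) (rho z)
    simp only [smul_eq_mul] at this
    rw [this]
    have h1 : |rho z| ≤ c := by simpa using hcb 0 le_rfl z
    exact mul_le_mul h1 (hC lam μ z x f B hl hμ hμl (by linarith) hxr hfa i hi (hB z hz'))
      (norm_nonneg _) (by positivity)
  have := norm_setIntegral_le_of_norm_le_const (μ := ν)
    ((isCompact_closedBall (0:E) (3 * r / 4)).measure_lt_top) hb
  refine this.trans (le_of_eq ?_)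
  rw [hK]; ring

lemma Ph_close {r t lam μ : ℝ} (ht : 1 ≤ t) (hl : 1 ≤ lam) (hμ : 0 ≤ μ)
    (hμl : μ ≤ lam / t) {z x : E} (hz : ‖z‖ ≤ r) (hx : ‖x‖ ≤ r) :
    ‖Ph μ z x - x‖ ≤ 2 * r * lam * ‖x‖ ^ 2 / t ∧
    ‖Ph μ z x‖ ≤ (1 + 2 * r ^ 2) * lam * ‖x‖ := by
  have hr : 0 ≤ r := (norm_nonneg _).trans hx
  have h1 := Ph_sub_le hμ hz hx
  have h2 := one_sub_om_le μ x
  have h3 : (1 - om μ x) * (2 * r) ≤ lam / t * ‖x‖ ^ 2 * (2 * r) := by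
    refine mul_le_mul_of_nonneg_right (h2.trans ?_) (by linarith)
    gcongr
  have h4 : ‖Ph μ z x - x‖ ≤ 2 * r * lam * ‖x‖ ^ 2 / t :=
    (h1.trans h3).trans (le_of_eq (by ring))
  refine ⟨h4, ?_⟩
  have h5 : 2 * r * lam * ‖x‖ ^ 2 / t ≤ 2 * r * lam * ‖x‖ ^ 2 := div_le_self (by positivity) ht
  have h6 : 2 * r * lam * ‖x‖ ^ 2 ≤ 2 * r ^ 2 * lam * ‖x‖ := by
    calc 2 * r * lam * ‖x‖ ^ 2 = 2 * r * lam * ‖x‖ * ‖x‖ := by ring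
      _ ≤ 2 * r * lam * ‖x‖ * r := by gcongr
      _ = _ := by ring
  have h7 : ‖Ph μ z x‖ ≤ ‖Ph μ z x - x‖ + ‖x‖ := by
    simpa using norm_add_le (Ph μ z x - x) x
  have h8 : ‖x‖ ≤ lam * ‖x‖ := le_mul_of_one_le_left (norm_nonneg _) hl
  nlinarith

/-- Remainder data: subtracting the Taylor polynomial. -/
lemma rem_bound (r : ℝ) (hr : 0 < r) (n p : ℕ) : ∃ C : ℝ, 0 ≤ C ∧
    ∀ (f : E → ℝ) (x0 : E) (B lam : ℝ), ContDiffOn ℝ ∞ f (ball 0 r) → 0 ≤ B → 1 ≤ lam → ‖x0‖ < r →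
    (∀ i ≤ n, ∀ y ∈ ball (0 : E) r, ‖iteratedFDeriv ℝ i f y‖ ≤ B * ‖y‖ ^ p) →
    ∀ j ≤ n, ∀ y : E, ‖y‖ < r → ‖y‖ ≤ (1 + 2 * r ^ 2) * lam * ‖x0‖ →
    ‖iteratedFDeriv ℝ j (fun y => f y - taylorP f x0 n y) y‖
      ≤ C * lam ^ p * ‖x0‖ ^ p * B * ‖y - x0‖ ^ (n - j) := by
  obtain ⟨C, hC0, hC⟩ := taylorP_bound (E := E) r hr n n
  refine ⟨(1 + 2 * r ^ 2) ^ p + C, by positivity, ?_⟩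
  intro f x0 B lam hf hB hl hx0 hfb j hj y hy hy'
  set g := fun y => f y - taylorP f x0 n y with hg
  have hgs : ContDiffOn ℝ ∞ g (ball 0 r) := hf.sub (contDiff_taylorP f x0 n).contDiffOn
  have hdg : ∀ i, ∀ y ∈ ball (0:E) r, iteratedFDeriv ℝ i g y
      = iteratedFDeriv ℝ i f y - iteratedFDeriv ℝ i (taylorP f x0 n) y := by
    intro i y hy
    exact fun_iteratedFDeriv_sub_apply
      ((hf.contDiffAt (isOpen_ball.mem_nhds hy)).of_le (natle i))
      ((contDiff_taylorP f x0 n).of_le (natle i)).contDiffAt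
  set Cs := ball (0:E) r ∩ closedBall 0 ((1 + 2 * r ^ 2) * lam * ‖x0‖) with hCs
  have hx0m : x0 ∈ ball (0:E) r := mem_ball_zero_iff.2 hx0
  have hx0C : x0 ∈ Cs := by
    refine ⟨hx0m, mem_closedBall_zero_iff.2 ?_⟩
    have h1 : 1 ≤ (1 + 2 * r ^ 2) * lam := one_le_mul_of_one_le_of_one_le (by nlinarith) hl
    exact le_mul_of_one_le_left (norm_nonneg _) h1
  have hv := vanish_bound isOpen_ball hgs (C := Cs) inter_subset_left
    ((convex_ball _ _).inter (convex_closedBall _ _)) hx0C (N := n)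
    (M := ((1 + 2 * r ^ 2) ^ p + C) * lam ^ p * ‖x0‖ ^ p * B) ?_ ?_ (n - j) (Nat.sub_le _ _) y
    ⟨mem_ball_zero_iff.2 hy, mem_closedBall_zero_iff.2 hy'⟩
  · rwa [Nat.sub_sub_self hj] at hv
  · intro i hi
    rw [hdg i x0 hx0m, iteratedFDeriv_taylorP isOpen_ball hf hx0m hi, sub_self]
  · rintro w ⟨hw1, hw2⟩
    rw [hdg n w hw1]
    refine (norm_sub_le _ _).trans ?_
    have a1 : ‖iteratedFDeriv ℝ n f w‖ ≤ B * ((1 + 2 * r ^ 2) * lam * ‖x0‖) ^ p := by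
      refine (hfb n le_rfl w hw1).trans ?_
      have := mem_closedBall_zero_iff.1 hw2
      gcongr
    have a2 := hC f x0 w (B * ‖x0‖ ^ p) hx0.le (mem_ball_zero_iff.1 hw1).le
      (fun j hj => hfb j hj.le x0 hx0m) (by positivity) n le_rfl
    have a3 : C * (B * ‖x0‖ ^ p) ≤ C * (B * ‖x0‖ ^ p) * lam ^ p :=
      le_mul_of_one_le_right (by positivity) (one_le_pow₀ hl)
    calc _ ≤ B * ((1 + 2 * r ^ 2) * lam * ‖x0‖) ^ p + C * (B * ‖x0‖ ^ p) * lam ^ p :=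
          add_le_add a1 (a2.trans a3)
      _ = _ := by rw [mul_pow, mul_pow]; ring

lemma sigma_lower {r t lam : ℝ} (ht : 1 ≤ t) (hl : 1 ≤ lam) {x : E} (hx0 : x ≠ 0)
    (hx : ‖x‖ ≤ r) : ‖x‖ ^ 2 * (1 - om (lam / t) x)⁻¹ ≤ (r ^ 2 + 1) * t := by
  have hX : 0 < ‖x‖ := norm_pos_iff.2 hx0
  have hs0 : 0 < 1 - om (lam / t) x := sub_pos.2 (om_lt_one (by positivity) hx0)
  rw [← div_eq_mul_inv, div_le_iff₀ hs0]
  set y := lam / t * ‖x‖ ^ 2 with hy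
  have hy0 : 0 < y := by positivity
  have h1 : om (lam / t) x ≤ 1 / (1 + y) := by
    unfold om
    rw [← hy, Real.exp_neg, ← one_div]
    exact one_div_le_one_div_of_le (by linarith) (by linarith [Real.add_one_le_exp y])
  have h2 : y / (1 + y) ≤ 1 - om (lam / t) x := by
    have : y / (1 + y) = 1 - 1 / (1 + y) := by field_simp; ring
    linarith
  refine le_trans ?_ (mul_le_mul_of_nonneg_left h2 (by positivity))
  rw [mul_div_assoc', le_div_iff₀ (by linarith)]
  have h3 : t * y = lam * ‖x‖ ^ 2 := by rw [hy]; field_simp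
  have hX2 : ‖x‖ ^ 2 ≤ r ^ 2 := by gcongr
  have h4 : (r ^ 2 + 1) * t * y = (r ^ 2 + 1) * lam * ‖x‖ ^ 2 := by rw [mul_assoc, h3]; ring
  have h5 : y ≤ lam * ‖x‖ ^ 2 := by nlinarith
  rw [h4]
  have : ‖x‖ ^ 2 * y ≤ ‖x‖ ^ 2 * (lam * r ^ 2) := by
    apply mul_le_mul_of_nonneg_left _ (by positivity)
    exact h5.trans (by gcongr)
  nlinarith [sq_nonneg ‖x‖]

lemma est1 {rho : E → ℝ} (hs : ContDiff ℝ ∞ rho) (hc : HasCompactSupport rho)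
    {r : ℝ} (hr : 0 < r) (hsupp : ∀ z, r / 2 ≤ ‖z‖ → rho z = 0) (n k l N : ℕ) (hN : N ≤ n + l) :
    ∃ C : ℝ, 0 ≤ C ∧ ∃ p : ℕ, ∀ (lam t : ℝ) (f : E → ℝ) (x0 : E) (B : ℝ), 1 ≤ lam → 1 ≤ t → 0 ≤ B →
    x0 ≠ 0 → ‖x0‖ < r → ContDiffOn ℝ ∞ f (ball 0 r) →
    (∀ i ≤ n, ∀ y ∈ ball (0 : E) r, ‖iteratedFDeriv ℝ i f y‖ ≤ B * ‖y‖ ^ (k + 2 * l)) →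
    ‖iteratedFDeriv ℝ N (AA ν r rho (lam / t) f) x0‖ ≤ C * lam ^ p * (t ^ l * ‖x0‖ ^ k * B) := by
  obtain ⟨C1, hC10, hC1⟩ := AA_simple ν hs hc hr N
  rcases le_or_gt N n with hNn | hNn
  · refine ⟨C1 * (1 + 2 * r ^ 2) ^ (k + 2 * l) * r ^ (2 * l), by positivity, N + (k + 2 * l), ?_⟩
    intro lam t f x0 B hl ht hB hx0 hxr hf hfb
    have hμ : 0 ≤ lam / t := by positivity
    have hμl : lam / t ≤ lam := div_le_self (by linarith) ht
    have := hC1 lam (lam / t) (ball 0 r) f x0 (B * ((1 + 2 * r ^ 2) * lam * ‖x0‖) ^ (k + 2 * l)) hl hμ hμl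
      isOpen_ball (good_ball hr hμ) (mem_ball_zero_iff.2 hxr) (by linarith) hf N le_rfl ?_
    · refine this.trans ?_
      have e1 : ‖x0‖ ^ (k + 2 * l) ≤ ‖x0‖ ^ k * r ^ (2 * l) := by
        rw [pow_add]; gcongr
      have e2 : (1:ℝ) ≤ t ^ l := one_le_pow₀ ht
      calc _ = C1 * lam ^ (N + (k + 2 * l)) * (1 + 2 * r ^ 2) ^ (k + 2 * l) * B * ‖x0‖ ^ (k + 2 * l) := by
            rw [mul_pow, mul_pow, pow_add lam N]; ring
        _ ≤ C1 * lam ^ (N + (k + 2 * l)) * (1 + 2 * r ^ 2) ^ (k + 2 * l) * B * (‖x0‖ ^ k * r ^ (2 * l)) := by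
            gcongr
        _ ≤ C1 * lam ^ (N + (k + 2 * l)) * (1 + 2 * r ^ 2) ^ (k + 2 * l) * B * (‖x0‖ ^ k * r ^ (2 * l)) * t ^ l :=
            le_mul_of_one_le_right (by positivity) e2
        _ = _ := by ring
    · intro z hz j hj
      have hP := Ph_lt hμ (z := z) (x := x0) (r := r) (by linarith) hxr
      refine (hfb j (hj.trans hNn) _ (mem_ball_zero_iff.2 hP)).trans ?_
      have := (Ph_close ht hl hμ le_rfl (r := r) (z := z) (by linarith) hxr.le).2
      gcongr
  · obtain ⟨C2, hC20, hC2⟩ := kernel_bound ν hs hc hr hsupp N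
    obtain ⟨C3, hC30, hC3⟩ := rem_bound (E := E) r hr n (k + 2 * l)
    obtain ⟨C4, hC40, hC4⟩ := taylorP_bound (E := E) r hr n N
    obtain ⟨l', rfl⟩ := Nat.exists_eq_add_of_lt hNn
    set m' := l' + 1 with hm'
    have hml : m' ≤ l := by omega
    refine ⟨C1 * C4 * r ^ (2 * l) + C2 * C3 * (2 * r) ^ n * (r ^ 2 + 1) ^ m' * r ^ (2 * (l - m')), by positivity,
      (n + l' + 1) + (k + 2 * l), ?_⟩
    intro lam t f x0 B hl ht hB hx0 hxr hf hfb
    have hμ0 : 0 < lam / t := by positivity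
    have hμ := hμ0.le
    have hμl : lam / t ≤ lam := div_le_self (by linarith) ht
    have hX : 0 < ‖x0‖ := norm_pos_iff.2 hx0
    have hx0m : x0 ∈ ball (0:E) r := mem_ball_zero_iff.2 hxr
    have hs0 : 0 < 1 - om (lam / t) x0 := sub_pos.2 (om_lt_one hμ0 hx0)
    set g := fun y => f y - taylorP f x0 n y with hg
    have hPs : ContDiffOn ℝ ∞ (taylorP f x0 n) (ball 0 r) := (contDiff_taylorP f x0 n).contDiffOn
    have hgs : ContDiffOn ℝ ∞ g (ball 0 r) := hf.sub hPs
    have hsplit : AA ν r rho (lam / t) f =ᶠ[𝓝 x0]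
        fun x => AA ν r rho (lam / t) (taylorP f x0 n) x + AA ν r rho (lam / t) g x := by
      filter_upwards [isOpen_ball.mem_nhds hx0m] with x hx
      unfold AA
      have hintg : ∀ h : E → ℝ, ContDiffOn ℝ ∞ h (ball 0 r) →
          IntegrableOn (fun z => rho z * h (Ph (lam / t) z x)) (closedBall 0 (3 * r / 4)) ν := by
        intro h hh
        refine ContinuousOn.integrableOn_compact (isCompact_closedBall _ _) ?_
        refine hs.continuous.continuousOn.mul (hh.continuousOn.comp ?_ ?_)
        · exact ((Ph_joint (lam / t)).continuous.comp
            (by fun_prop : Continuous fun z : E => (x, z))).continuousOn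
        · intro z hz
          exact mem_ball_zero_iff.2 (Ph_lt hμ (by have := mem_closedBall_zero_iff.1 hz; linarith)
            (mem_ball_zero_iff.1 hx))
      rw [← integral_add (hintg _ hPs) (hintg _ hgs)]
      congr 1; ext z; simp only [hg]; ring
    rw [hsplit.iteratedFDeriv ℝ _ |>.self_of_nhds]
    rw [fun_iteratedFDeriv_add_apply
      (((AA_smooth ν hs hr isOpen_ball (good_ball hr hμ) hPs).2.contDiffAt
        (isOpen_ball.mem_nhds hx0m)).of_le (natle _))
      (((AA_smooth ν hs hr isOpen_ball (good_ball hr hμ) hgs).2.contDiffAt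
        (isOpen_ball.mem_nhds hx0m)).of_le (natle _))]
    refine (norm_add_le _ _).trans ?_
    -- polynomial part
    have p1 := hC1 lam (lam / t) (ball 0 r) (taylorP f x0 n) x0 (C4 * (B * ‖x0‖ ^ (k + 2 * l)))
      hl hμ hμl isOpen_ball (good_ball hr hμ) hx0m (by linarith) hPs _ le_rfl (by
        intro z hz j hj
        have hP := Ph_lt hμ (z := z) (x := x0) (r := r) (by linarith) hxr
        exact hC4 f x0 _ _ hxr.le hP.le (fun j hj => hfb j hj.le x0 hx0m) (by positivity) j hj)
    -- remainder part
    have p2 := hC2 lam (lam / t) x0 g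
      (C3 * lam ^ (k + 2 * l) * ‖x0‖ ^ (k + 2 * l) * B * ((1 - om (lam / t) x0) * (2 * r)) ^ n)
      hl hμ0 hμl hx0 hxr hgs (by
        intro z hz
        have hP := Ph_lt hμ (z := z) (x := x0) (r := r) (by linarith) hxr
        have h1 := hC3 f x0 B lam hf hB hl hxr hfb 0 (Nat.zero_le _) (Ph (lam / t) z x0) hP
          (Ph_close ht hl hμ le_rfl (r := r) (z := z) (by linarith) hxr.le).2
        rw [norm_iteratedFDeriv_zero, Real.norm_eq_abs, Nat.sub_zero] at h1
        refine h1.trans ?_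
        have h2 := Ph_sub_le hμ (z := z) (x := x0) (r := r) (by linarith) hxr.le
        gcongr)
    have q1 : C1 * lam ^ (n + l' + 1) * (C4 * (B * ‖x0‖ ^ (k + 2 * l)))
        ≤ C1 * C4 * r ^ (2 * l) * lam ^ ((n + l' + 1) + (k + 2 * l)) * (t ^ l * ‖x0‖ ^ k * B) := by
      have e1 : ‖x0‖ ^ (k + 2 * l) ≤ ‖x0‖ ^ k * r ^ (2 * l) := by
        rw [pow_add]; gcongr
      have e2 : (1:ℝ) ≤ t ^ l := one_le_pow₀ ht
      have e3 : lam ^ (n + l' + 1) ≤ lam ^ ((n + l' + 1) + (k + 2 * l)) :=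
        pow_le_pow_right₀ hl (Nat.le_add_right _ _)
      calc _ ≤ C1 * lam ^ ((n + l' + 1) + (k + 2 * l)) * (C4 * (B * (‖x0‖ ^ k * r ^ (2 * l)))) := by gcongr
        _ ≤ C1 * lam ^ ((n + l' + 1) + (k + 2 * l)) * (C4 * (B * (‖x0‖ ^ k * r ^ (2 * l)))) * t ^ l :=
          le_mul_of_one_le_right (by positivity) e2
        _ = _ := by ring
    have q2 : C2 * (lam / (1 - om (lam / t) x0)) ^ (n + l' + 1) *
        (C3 * lam ^ (k + 2 * l) * ‖x0‖ ^ (k + 2 * l) * B * ((1 - om (lam / t) x0) * (2 * r)) ^ n)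
        ≤ C2 * C3 * (2 * r) ^ n * (r ^ 2 + 1) ^ m' * r ^ (2 * (l - m')) *
          lam ^ ((n + l' + 1) + (k + 2 * l)) * (t ^ l * ‖x0‖ ^ k * B) := by
      have hsl := sigma_lower ht hl hx0 hxr.le
      set s := 1 - om (lam / t) x0
      have e1 : ‖x0‖ ^ (k + 2 * l) * (s⁻¹) ^ m' ≤
          ‖x0‖ ^ k * r ^ (2 * (l - m')) * ((r ^ 2 + 1) ^ m' * t ^ l) := by
        have e0 : k + 2 * l = k + 2 * (l - m') + 2 * m' := by omega
        calc _ = ‖x0‖ ^ k * ‖x0‖ ^ (2 * (l - m')) * (‖x0‖ ^ 2 * s⁻¹) ^ m' := by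
              rw [e0, pow_add, pow_add, mul_pow, ← pow_mul]; ring
          _ ≤ ‖x0‖ ^ k * r ^ (2 * (l - m')) * ((r ^ 2 + 1) * t) ^ m' := by gcongr
          _ ≤ _ := by
            rw [mul_pow]
            gcongr
      have e2 : (lam / s) ^ (n + l' + 1) * (s * (2 * r)) ^ n
          = lam ^ (n + l' + 1) * (2 * r) ^ n * (s⁻¹) ^ m' := by
        rw [div_eq_mul_inv, mul_pow, mul_pow, hm', add_assoc n l' 1, pow_add s⁻¹ n]
        have : s⁻¹ ^ n * s ^ n = 1 := by rw [← mul_pow, inv_mul_cancel₀ hs0.ne', one_pow]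
        linear_combination (lam ^ (n + (l' + 1)) * s⁻¹ ^ (l' + 1) * (2 * r) ^ n) * this
      calc _ = C2 * C3 * lam ^ (k + 2 * l) * B * ‖x0‖ ^ (k + 2 * l) *
            ((lam / s) ^ (n + l' + 1) * (s * (2 * r)) ^ n) := by ring
        _ = C2 * C3 * (2 * r) ^ n * lam ^ ((n + l' + 1) + (k + 2 * l)) * B *
            (‖x0‖ ^ (k + 2 * l) * (s⁻¹) ^ m') := by rw [e2, pow_add lam]; ring
        _ ≤ C2 * C3 * (2 * r) ^ n * lam ^ ((n + l' + 1) + (k + 2 * l)) * B *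
            (‖x0‖ ^ k * r ^ (2 * (l - m')) * ((r ^ 2 + 1) ^ m' * t ^ l)) := by gcongr
        _ = _ := by ring
    refine (add_le_add (p1.trans q1) (p2.trans q2)).trans (le_of_eq ?_)
    ring

end est
end FS


namespace FS
open Filter Topology MeasureTheory
open scoped ContDiff Nat

section ssop
variable {E : Type*} [NormedAddCommGroup E] [InnerProductSpace ℝ E] [FiniteDimensional ℝ E]
  [MeasurableSpace E] [BorelSpace E] (ν : Measure E) [ν.IsAddHaarMeasure]

/-- smooth on the open ball with all derivatives bounded -/
def Bd (r : ℝ) (f : E → ℝ) : Prop :=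
  ContDiffOn ℝ ∞ f (ball 0 r) ∧ ∀ i : ℕ, ∃ B : ℝ, ∀ y ∈ ball (0 : E) r, ‖iteratedFDeriv ℝ i f y‖ ≤ B

lemma Bd.cda {r : ℝ} {f : E → ℝ} (h : Bd r f) {x : E} (hx : x ∈ ball (0:E) r) (i : ℕ) :
    ContDiffAt ℝ i f x := (h.1.contDiffAt (isOpen_ball.mem_nhds hx)).of_le (natle i)

lemma Bd.add {r : ℝ} {f g : E → ℝ} (hf : Bd r f) (hg : Bd r g) : Bd r (fun x => f x + g x) := by
  refine ⟨hf.1.add hg.1, fun i => ?_⟩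
  obtain ⟨B, hB⟩ := hf.2 i
  obtain ⟨B', hB'⟩ := hg.2 i
  refine ⟨B + B', fun y hy => ?_⟩
  rw [fun_iteratedFDeriv_add_apply (hf.cda hy i) (hg.cda hy i)]
  exact (norm_add_le _ _).trans (add_le_add (hB y hy) (hB' y hy))

lemma Bd.smul {r : ℝ} {f : E → ℝ} (hf : Bd r f) (c : ℝ) : Bd r (fun x => c * f x) := by
  refine ⟨contDiffOn_const.mul hf.1, fun i => ?_⟩
  obtain ⟨B, hB⟩ := hf.2 i
  refine ⟨|c| * B, fun y hy => ?_⟩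
  have := smul_norm (hf.cda hy i) c
  simp only [smul_eq_mul] at this
  rw [this]
  exact mul_le_mul_of_nonneg_left (hB y hy) (abs_nonneg _)

lemma Bd.of_contDiff {r : ℝ} {f : E → ℝ} (hf : ContDiff ℝ ∞ f) : Bd r f := by
  refine ⟨hf.contDiffOn, fun i => ?_⟩
  have : ProperSpace E := FiniteDimensional.proper ℝ E
  obtain ⟨B, hB⟩ := (isCompact_closedBall (0:E) r).exists_bound_of_continuousOn
    (hf.continuous_iteratedFDeriv (m := i) (natle i)).continuousOn
  exact ⟨B, fun y hy => hB y (ball_subset_closedBall hy)⟩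

def WW (r t : ℝ) : Set E :=
  {x | ‖x‖ < 2 * r ∧ om (1 / t) x * ‖x‖ + (1 - om (1 / t) x) * (7 * r / 8) < r}

lemma WW_open (r t : ℝ) : IsOpen (WW (E := E) r t) := by
  have h := (om_contDiff (E := E) (1 / t)).continuous
  exact (isOpen_lt continuous_norm continuous_const).inter
    (isOpen_lt ((h.mul continuous_norm).add ((continuous_const.sub h).mul continuous_const))
      continuous_const)

lemma WW_sup {r t : ℝ} (hr : 0 < r) (ht : 1 ≤ t) : closedBall (0:E) r ⊆ WW r t := by
  intro x hx
  rw [mem_closedBall_zero_iff] at hx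
  refine ⟨by linarith, ?_⟩
  by_cases h : x = 0
  · subst h
    simp [om, hr]
  · have h1 := om_lt_one (μ := 1 / t) (by positivity) h
    have h2 := om_pos (1 / t) x
    nlinarith [mul_le_mul_of_nonneg_left hx h2.le]

lemma WW_good {r t : ℝ} (hr : 0 < r) (ht : 1 ≤ t) (k : ℕ) : Good r (2 ^ k / t) (WW (E := E) r t) := by
  intro x hx z hz
  rw [mem_ball_zero_iff] at *
  have hμ : (0:ℝ) ≤ 2 ^ k / t := by positivity
  refine (Ph_norm_le hμ z x).trans_lt ?_
  have h1 := om_pos (2 ^ k / t) x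
  have h2 := om_le_one hμ x
  have h3 : om (2 ^ k / t) x ≤ om (1 / t) x := by
    unfold om
    rw [Real.exp_le_exp, neg_le_neg_iff]
    have : (1:ℝ) ≤ 2 ^ k := one_le_pow₀ (by norm_num)
    gcongr
  have h4 := mul_le_mul_of_nonneg_left hz.le (sub_nonneg.2 h2)
  rcases le_or_gt ‖x‖ (7 * r / 8) with h | h
  · nlinarith [mul_le_mul_of_nonneg_left h h1.le]
  · nlinarith [mul_le_mul_of_nonneg_right h3 (sub_nonneg.2 h.le), hx.2]

/-- The smoothing operator. -/
noncomputable def SS (r : ℝ) (rho : E → ℝ) (b : ℕ → ℝ) (t : ℝ) (f : E → ℝ) (x : E) : ℝ :=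
  ∫ k, b k * AA ν r rho (2 ^ k / t) f x ∂(Measure.count : Measure ℕ)

variable {ν} {r t : ℝ} {rho : E → ℝ} {b : ℕ → ℝ}

lemma int_count (hb : ∀ p : ℕ, Summable fun k => |b k| * ((2 : ℝ) ^ k) ^ p) (c : ℝ) (p : ℕ) :
    Integrable (fun k => c * (|b k| * ((2 : ℝ) ^ k) ^ p)) (Measure.count : Measure ℕ) := by
  rw [integrable_count_iff]
  refine ((hb p).mul_left |c|).congr fun k => ?_
  rw [norm_mul, Real.norm_eq_abs, Real.norm_of_nonneg (by positivity)]

lemma SS_smooth (hb : ∀ p : ℕ, Summable fun k => |b k| * ((2 : ℝ) ^ k) ^ p)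
    (hs : ContDiff ℝ ∞ rho) (hc : HasCompactSupport rho) (hr : 0 < r) (ht : 1 ≤ t) {f : E → ℝ}
    (hf : Bd r f) :
    (∀ N : ℕ, ∀ x ∈ WW (E := E) r t, iteratedFDeriv ℝ N (SS ν r rho b t f) x
      = ∫ k, iteratedFDeriv ℝ N (fun y => b k * AA ν r rho (2 ^ k / t) f y) x
        ∂(Measure.count : Measure ℕ)) ∧
    ContDiffOn ℝ ∞ (SS ν r rho b t f) (WW r t) := by
  have hA : ∀ k, ContDiffOn ℝ ∞ (AA ν r rho (2 ^ k / t) f) (WW r t) := fun k =>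
    (AA_smooth ν hs hr (WW_open r t) (WW_good hr ht k) hf.1).2
  refine integral_smooth (Measure.count : Measure ℕ) (ph := fun k y => b k * AA ν r rho (2 ^ k / t) f y)
    (WW_open r t) (Eventually.of_forall fun k => contDiffOn_const.mul (hA k)) ?_ ?_
  · intro n x hx
    exact continuous_of_discreteTopology.aestronglyMeasurable
  · intro N x hx
    obtain ⟨C, hC0, hC⟩ := AA_simple ν hs hc hr N
    choose Bf hBf using hf.2
    set B := ∑ j ∈ Finset.range (N + 1), |Bf j| with hB
    refine ⟨WW r t, (WW_open r t).mem_nhds hx, fun k => (C * B) * (|b k| * ((2 : ℝ) ^ k) ^ N),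
      int_count hb _ _, Eventually.of_forall fun k y hy => ?_⟩
    have h1 := smul_norm (((hA k).contDiffAt ((WW_open r t).mem_nhds hy)).of_le (natle N)) (b k)
    simp only [smul_eq_mul] at h1
    rw [h1]
    have h2k : (1:ℝ) ≤ 2 ^ k := one_le_pow₀ (by norm_num)
    have := hC (2 ^ k) (2 ^ k / t) (WW r t) f y B h2k (by positivity) (div_le_self (by positivity) ht)
      (WW_open r t) (WW_good hr ht k) hy hy.1.le hf.1 N le_rfl ?_
    · calc _ ≤ |b k| * (C * (2 ^ k) ^ N * B) := mul_le_mul_of_nonneg_left this (abs_nonneg _)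
        _ = _ := by ring
    · intro z hz j hj
      refine (hBf j _ (WW_good hr ht k y hy z (mem_ball_zero_iff.2 (by linarith)))).trans ?_
      exact (le_abs_self _).trans (Finset.single_le_sum (f := fun j => |Bf j|)
        (fun _ _ => abs_nonneg _) (Finset.mem_range.2 (by omega)))

lemma SS_bound (hb : ∀ p : ℕ, Summable fun k => |b k| * ((2 : ℝ) ^ k) ^ p)
    (hs : ContDiff ℝ ∞ rho) (hc : HasCompactSupport rho) (hr : 0 < r) (ht : 1 ≤ t) {f : E → ℝ}
    (hf : Bd r f) {N p : ℕ} {x : E} (hx : x ∈ WW r t) {Q : ℝ}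
    (h : ∀ k : ℕ, ‖iteratedFDeriv ℝ N (AA ν r rho (2 ^ k / t) f) x‖ ≤ Q * (2 ^ k) ^ p) :
    ‖iteratedFDeriv ℝ N (SS ν r rho b t f) x‖ ≤ Q * ∑' k, |b k| * ((2 : ℝ) ^ k) ^ p := by
  have hA : ∀ k, ContDiffOn ℝ ∞ (AA ν r rho (2 ^ k / t) f) (WW r t) := fun k =>
    (AA_smooth ν hs hr (WW_open r t) (WW_good hr ht k) hf.1).2
  rw [(SS_smooth hb hs hc hr ht hf).1 N x hx, ← tsum_mul_left]
  have hi := int_count hb Q p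
  have e : ∑' k, Q * (|b k| * ((2 : ℝ) ^ k) ^ p)
      = ∫ k, Q * (|b k| * ((2 : ℝ) ^ k) ^ p) ∂(Measure.count : Measure ℕ) := by
    rw [integral_countable hi]; simp
  rw [e]
  refine norm_integral_le_of_norm_le hi (Eventually.of_forall fun k => ?_)
  have h1 := smul_norm (((hA k).contDiffAt ((WW_open r t).mem_nhds hx)).of_le (natle N)) (b k)
  simp only [smul_eq_mul] at h1
  rw [h1]
  calc _ ≤ |b k| * (Q * (2 ^ k) ^ p) := mul_le_mul_of_nonneg_left (h k) (abs_nonneg _)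
    _ = _ := by ring

lemma SS_int (hb : ∀ p : ℕ, Summable fun k => |b k| * ((2 : ℝ) ^ k) ^ p)
    (hs : ContDiff ℝ ∞ rho) (hc : HasCompactSupport rho) (hr : 0 < r) (ht : 1 ≤ t) {f : E → ℝ}
    (hf : Bd r f) {x : E} (hx : x ∈ WW r t) :
    Integrable (fun k => b k * AA ν r rho (2 ^ k / t) f x) (Measure.count : Measure ℕ) := by
  obtain ⟨C, hC0, hC⟩ := AA_simple ν hs hc hr 0
  obtain ⟨B, hB⟩ := hf.2 0
  refine (int_count hb (C * B) 0).mono' (measurable_from_top : Measurable _).aestronglyMeasurable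
    (Eventually.of_forall fun k => ?_)
  have h2k : (1:ℝ) ≤ 2 ^ k := one_le_pow₀ (by norm_num)
  have := hC (2 ^ k) (2 ^ k / t) (WW r t) f x B h2k (by positivity) (div_le_self (by positivity) ht)
      (WW_open r t) (WW_good hr ht k) hx hx.1.le hf.1 0 le_rfl ?_
  · rw [norm_iteratedFDeriv_zero] at this
    rw [norm_mul, Real.norm_eq_abs]
    calc _ ≤ |b k| * (C * (2 ^ k) ^ 0 * B) := mul_le_mul_of_nonneg_left this (abs_nonneg _)
      _ = _ := by ring
  · intro z hz j hj
    obtain rfl : j = 0 := by omega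
    exact hB _ (WW_good hr ht k x hx z (mem_ball_zero_iff.2 (by linarith)))

lemma AA_int (hs : ContDiff ℝ ∞ rho) (hr : 0 < r) (ht : 1 ≤ t) {f : E → ℝ}
    (hf : Bd r f) {x : E} (hx : x ∈ WW r t) (k : ℕ) :
    IntegrableOn (fun z => rho z * f (Ph (2 ^ k / t) z x)) (closedBall 0 (3 * r / 4)) ν := by
  have : ProperSpace E := FiniteDimensional.proper ℝ E
  refine ContinuousOn.integrableOn_compact (isCompact_closedBall _ _) ?_
  refine hs.continuous.continuousOn.mul (hf.1.continuousOn.comp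
    (((Ph_joint (E := E) (2 ^ k / t)).continuous.comp (by fun_prop : Continuous fun z : E => (x, z))).continuousOn) ?_)
  intro z hz
  exact WW_good hr ht k x hx z (mem_ball_zero_iff.2 (by
    have := mem_closedBall_zero_iff.1 hz
    linarith))

lemma SS_add (hb : ∀ p : ℕ, Summable fun k => |b k| * ((2 : ℝ) ^ k) ^ p)
    (hs : ContDiff ℝ ∞ rho) (hc : HasCompactSupport rho) (hr : 0 < r) (ht : 1 ≤ t) {f g : E → ℝ}
    (hf : Bd r f) (hg : Bd r g) {x : E} (hx : x ∈ WW r t) :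
    SS ν r rho b t (fun y => f y + g y) x = SS ν r rho b t f x + SS ν r rho b t g x := by
  unfold SS
  rw [← integral_add (SS_int hb hs hc hr ht hf hx) (SS_int hb hs hc hr ht hg hx)]
  congr 1
  ext k
  rw [← mul_add]
  unfold AA
  rw [← integral_add (AA_int hs hr ht hf hx k) (AA_int hs hr ht hg hx k)]
  simp only [mul_add]

lemma SS_smul (c : ℝ) (f : E → ℝ) (x : E) :
    SS ν r rho b t (fun y => c * f y) x = c * SS ν r rho b t f x := by
  unfold SS AA
  rw [← integral_const_mul]
  congr 1
  ext k
  rw [mul_left_comm c, ← integral_const_mul c]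
  congr 2
  ext z
  ring

lemma SS_zero (hb : ∀ p : ℕ, Summable fun k => |b k| * ((2 : ℝ) ^ k) ^ p)
    (hs : ContDiff ℝ ∞ rho) (hc : HasCompactSupport rho) (hr : 0 < r) (ht : 1 ≤ t) {f : E → ℝ}
    (hf : Bd r f) (h0 : ∀ i : ℕ, iteratedFDeriv ℝ i f 0 = 0) (N : ℕ) :
    iteratedFDeriv ℝ N (SS ν r rho b t f) 0 = 0 := by
  obtain ⟨C, hC0, hC⟩ := AA_simple ν hs hc hr N
  have hx : (0:E) ∈ WW r t := WW_sup hr ht (by simp [hr.le])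
  have := SS_bound (ν := ν) (N := N) (p := 0) hb hs hc hr ht hf hx (Q := 0) ?_
  · simpa using this
  intro k
  have h2k : (1:ℝ) ≤ 2 ^ k := one_le_pow₀ (by norm_num)
  have := hC (2 ^ k) (2 ^ k / t) (WW r t) f 0 0 h2k (by positivity) (div_le_self (by positivity) ht)
      (WW_open r t) (WW_good hr ht k) hx hx.1.le hf.1 N le_rfl ?_
  · simpa using this
  intro z hz j hj
  have : Ph (2 ^ k / t) z (0:E) = 0 := by simp [Ph, om]
  rw [this, h0]; simp

end ssop
end FS


namespace FS
open Filter Topology MeasureTheory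
open scoped ContDiff Nat

section estt
variable {E : Type*} [NormedAddCommGroup E] [InnerProductSpace ℝ E] [FiniteDimensional ℝ E]
  [MeasurableSpace E] [BorelSpace E] (ν : Measure E) [ν.IsAddHaarMeasure]

lemma est2g {rho : E → ℝ} (hs : ContDiff ℝ ∞ rho) (hc : HasCompactSupport rho)
    {r : ℝ} (hr : 0 < r) (n k l : ℕ) : ∃ C : ℝ, 0 ≤ C ∧ ∃ p : ℕ, ∀ (lam t : ℝ) (f : E → ℝ) (x0 : E) (B : ℝ),
    1 ≤ lam → 1 ≤ t → 0 ≤ B → ‖x0‖ < r → ContDiffOn ℝ ∞ f (ball 0 r) →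
    (∀ i ≤ n + l, ∀ y ∈ ball (0 : E) r, ‖iteratedFDeriv ℝ i f y‖ ≤ B * ‖y‖ ^ k) → ∀ i ≤ n,
    ‖iteratedFDeriv ℝ i (AA ν r rho (lam / t) (fun y => f y - taylorP f x0 (n + l) y)) x0‖
      ≤ C * (t⁻¹ ^ l * ‖x0‖ ^ (k + 2 * l) * B) * lam ^ p ∧
    ‖iteratedFDeriv ℝ i (fun y => f y - taylorP f x0 (n + l) y) x0‖
      ≤ C * (t⁻¹ ^ l * ‖x0‖ ^ (k + 2 * l) * B) := by
  obtain ⟨C1, hC10, hC1⟩ := AA_simple ν hs hc hr n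
  obtain ⟨C3, hC30, hC3⟩ := rem_bound (E := E) r hr (n + l) k
  refine ⟨C1 * C3 * (2 * r) ^ l * (2 * r + 1) ^ n + C3, by positivity, n + k + l, ?_⟩
  intro lam t f x0 B hl ht hB hxr hf hfb i hi
  have hμ : 0 ≤ lam / t := by positivity
  have hμl : lam / t ≤ lam := div_le_self (by linarith) ht
  constructor
  · set B' := C3 * lam ^ k * ‖x0‖ ^ k * B * ((2 * r * lam * ‖x0‖ ^ 2 / t) ^ l * (2 * r + 1) ^ n) with hB'
    have := hC1 lam (lam / t) (ball 0 r) (fun y => f y - taylorP f x0 (n + l) y) x0 B' hl hμ hμl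
      isOpen_ball (good_ball hr hμ) (mem_ball_zero_iff.2 hxr) (by linarith)
      (hf.sub (contDiff_taylorP f x0 (n + l)).contDiffOn) i hi ?_
    · refine this.trans ?_
      calc C1 * lam ^ n * B' = (C1 * C3 * (2 * r) ^ l * (2 * r + 1) ^ n)
            * (t⁻¹ ^ l * ‖x0‖ ^ (k + 2 * l) * B) * lam ^ (n + k + l) := by
            rw [hB', div_eq_mul_inv, mul_pow, mul_pow, mul_pow, pow_add ‖x0‖, pow_mul, pow_add lam,
              pow_add lam]; ring
        _ ≤ _ := by
            have : 0 ≤ (t⁻¹ ^ l * ‖x0‖ ^ (k + 2 * l) * B) := by positivity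
            gcongr
            linarith
    · intro z hz j hj
      have hP := Ph_lt hμ (z := z) (x := x0) (r := r) (by linarith) hxr
      obtain ⟨h1, h2⟩ := Ph_close ht hl hμ le_rfl (r := r) (z := z) (by linarith) hxr.le
      refine (hC3 f x0 B lam hf hB hl hxr hfb j (by omega) _ hP h2).trans ?_
      have h3 : ‖Ph (lam / t) z x0 - x0‖ ≤ 2 * r + 1 :=
        (norm_sub_le _ _).trans (by linarith)
      have e : n + l - j = l + (n - j) := by omega
      rw [hB', e, pow_add ‖_‖ l]
      have h4 : ‖Ph (lam / t) z x0 - x0‖ ^ (n - j) ≤ (2 * r + 1) ^ n :=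
        (pow_le_pow_left₀ (norm_nonneg _) h3 _).trans
          (pow_le_pow_right₀ (by linarith) (Nat.sub_le _ _))
      gcongr
  · have := hC3 f x0 B 1 hf hB le_rfl hxr hfb i (by omega) x0 hxr ?_
    · refine this.trans ?_
      have e : n + l - i = l + (n - i) := by omega
      have h0 : ‖x0 - x0‖ ^ (n + l - i) ≤ (t⁻¹ * ‖x0‖ ^ 2) ^ l := by
        rw [sub_self, norm_zero, e, pow_add]
        have a1 : (0:ℝ) ^ l ≤ (t⁻¹ * ‖x0‖ ^ 2) ^ l := pow_le_pow_left₀ le_rfl (by positivity) _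
        have a2 : (0:ℝ) ^ (n - i) ≤ 1 := pow_le_one₀ le_rfl zero_le_one
        calc _ ≤ (0:ℝ) ^ l * 1 := by gcongr
          _ ≤ _ := by simpa using a1
      calc _ ≤ C3 * 1 ^ k * ‖x0‖ ^ k * B * (t⁻¹ * ‖x0‖ ^ 2) ^ l := by gcongr
        _ = C3 * (t⁻¹ ^ l * ‖x0‖ ^ (k + 2 * l) * B) := by
          rw [mul_pow, pow_add, pow_mul, one_pow]; ring
        _ ≤ _ := by
          have : 0 ≤ C1 * C3 * (2 * r) ^ l * (2 * r + 1) ^ n := by positivity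
          gcongr
          linarith
    · have h1 : 1 ≤ (1 + 2 * r ^ 2) * 1 := by nlinarith
      exact le_mul_of_one_le_left (norm_nonneg _) h1

/-- averaged polynomial pieces -/
noncomputable def Qb (r : ℝ) (rho : E → ℝ) (x0 : E) {j : ℕ} (T : E [×j]→L[ℝ] ℝ) (S : Finset (Fin j))
    (x : E) : ℝ :=
  ∫ z in closedBall 0 (3 * r / 4), rho z * T (fun k => if k ∈ S then x - z else z - x0) ∂ν

lemma Qb_joint {rho : E → ℝ} (hs : ContDiff ℝ ∞ rho) (x0 : E) {j : ℕ}
    (T : E [×j]→L[ℝ] ℝ) (S : Finset (Fin j)) :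
    ContDiff ℝ ∞ (fun p : E × E => rho p.2 * T (fun k => if k ∈ S then p.1 - p.2 else p.2 - x0)) := by
  refine (hs.comp contDiff_snd).mul (T.contDiff.comp (contDiff_pi.2 fun k => ?_))
  by_cases h : k ∈ S
  · simp only [h, if_true]; fun_prop
  · simp only [h, if_false]; fun_prop

lemma Qb_smooth {rho : E → ℝ} (hs : ContDiff ℝ ∞ rho) (r : ℝ) (x0 : E) {j : ℕ}
    (T : E [×j]→L[ℝ] ℝ) (S : Finset (Fin j)) :
    (∀ n : ℕ, ∀ x, iteratedFDeriv ℝ n (Qb ν r rho x0 T S) x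
      = ∫ z in closedBall 0 (3 * r / 4), iteratedFDeriv ℝ n
        (fun y => rho z * T (fun k => if k ∈ S then y - z else z - x0)) x ∂ν) ∧
    ContDiff ℝ ∞ (Qb ν r rho x0 T S) := by
  have : ProperSpace E := FiniteDimensional.proper ℝ E
  have := integral_compact_smooth ν isOpen_univ isOpen_univ (isCompact_closedBall (0:E) (3 * r / 4))
    (subset_univ _) (Qb_joint hs x0 T S).contDiffOn
  exact ⟨fun n x => this.1 n x (mem_univ _), contDiffOn_univ.1 this.2⟩

lemma Qb_bound {rho : E → ℝ} (hs : ContDiff ℝ ∞ rho) (hc : HasCompactSupport rho) {r : ℝ} (hr : 0 < r)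
    (j N : ℕ) : ∃ C : ℝ, 0 ≤ C ∧ ∀ (T : E [×j]→L[ℝ] ℝ) (S : Finset (Fin j)) (x0 x : E), ‖x0‖ ≤ r →
    ‖x‖ ≤ r → ∀ i ≤ N, ‖iteratedFDeriv ℝ i (Qb ν r rho x0 T S) x‖ ≤ C * ‖T‖ := by
  obtain ⟨C, hC0, hC⟩ := lemQ (E := E) r hr j N
  obtain ⟨c, hc1, hcb⟩ := exists_bound_bump hs hc 0
  have : ProperSpace E := FiniteDimensional.proper ℝ E
  set K := closedBall (0 : E) (3 * r / 4) with hK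
  refine ⟨c * C * ν.real K, by positivity, ?_⟩
  intro T S x0 x hx0 hx i hi
  rw [(Qb_smooth ν hs r x0 T S).1 i x]
  have hb : ∀ z ∈ K, ‖iteratedFDeriv ℝ i
      (fun y => rho z * T (fun k => if k ∈ S then y - z else z - x0)) x‖ ≤ c * (C * ‖T‖) := by
    intro z hz
    have hz' : ‖z‖ ≤ 3 * r / 4 := mem_closedBall_zero_iff.1 hz
    have hfc : ContDiff ℝ ∞ (fun y => T (fun k => if k ∈ S then y - z else z - x0)) := by
      refine T.contDiff.comp (contDiff_pi.2 fun k => ?_)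
      by_cases h : k ∈ S
      · simp only [h, if_true]; fun_prop
      · simp only [h, if_false]; fun_prop
    have := smul_norm (hfc.contDiffAt.of_le (natle i)) (rho z) (x := x)
    simp only [smul_eq_mul] at this
    rw [this]
    have h1 : |rho z| ≤ c := by simpa using hcb 0 le_rfl z
    exact mul_le_mul h1 (hC T S z x0 x (by linarith) hx0 hx i hi)
      (norm_nonneg _) (by positivity)
  have := norm_setIntegral_le_of_norm_le_const (μ := ν)
    ((isCompact_closedBall (0:E) (3 * r / 4)).measure_lt_top) hb
  refine this.trans (le_of_eq ?_)
  rw [hK]; ring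

lemma T_expand {j : ℕ} (T : E [×j]→L[ℝ] ℝ) (μ : ℝ) (z x x0 : E) :
    T (fun _ => Ph μ z x - x0) = ∑ S : Finset (Fin j), om μ x ^ S.card *
      T (fun k => if k ∈ S then x - z else z - x0) := by
  have h : (fun _ : Fin j => Ph μ z x - x0) = (fun _ => om μ x • (x - z)) + (fun _ => z - x0) := by
    ext1 k
    simp only [Ph, Pi.add_apply]; abel
  rw [h, T.map_add_univ]
  refine Finset.sum_congr rfl fun S _ => ?_
  have := T.toMultilinearMap.map_piecewise_smul (fun _ => om μ x)
    (fun k => if k ∈ S then x - z else z - x0) S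
  rw [Finset.prod_const, smul_eq_mul] at this
  rw [← ContinuousMultilinearMap.coe_coe, ← this]
  congr 1
  ext1 k
  by_cases hk : k ∈ S <;> simp [Finset.piecewise, hk]

lemma AA_taylor {rho : E → ℝ} (hs : ContDiff ℝ ∞ rho) (r μ : ℝ) (f : E → ℝ) (x0 x : E) (M : ℕ) :
    AA ν r rho μ (taylorP f x0 M) x = ∑ j ∈ Finset.range M, ∑ S : Finset (Fin j),
      om μ x ^ S.card * Qb ν r rho x0 ((j ! : ℝ)⁻¹ • iteratedFDeriv ℝ j f x0) S x := by
  have : ProperSpace E := FiniteDimensional.proper ℝ E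
  have hi : ∀ (j : ℕ) (T : E [×j]→L[ℝ] ℝ) (S : Finset (Fin j)), IntegrableOn (fun z => om μ x ^ S.card *
      (rho z * T (fun k => if k ∈ S then x - z else z - x0))) (closedBall 0 (3 * r / 4)) ν := by
    intro j T S
    refine ContinuousOn.integrableOn_compact (isCompact_closedBall _ _) ?_
    exact (continuous_const.mul ((Qb_joint hs x0 T S).continuous.comp
      (by fun_prop : Continuous fun z : E => (x, z)))).continuousOn
  unfold AA Qb taylorP
  simp_rw [← integral_const_mul]
  have e : ∀ j : ℕ, ∑ S : Finset (Fin j), ∫ z in closedBall 0 (3 * r / 4), om μ x ^ S.card *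
      (rho z * ((j ! : ℝ)⁻¹ • iteratedFDeriv ℝ j f x0) (fun k => if k ∈ S then x - z else z - x0)) ∂ν
      = ∫ z in closedBall 0 (3 * r / 4), ∑ S : Finset (Fin j), om μ x ^ S.card *
      (rho z * ((j ! : ℝ)⁻¹ • iteratedFDeriv ℝ j f x0) (fun k => if k ∈ S then x - z else z - x0)) ∂ν :=
    fun j => (integral_finset_sum _ fun S _ => hi j _ S).symm
  rw [Finset.sum_congr rfl fun j _ => e j, ← integral_finset_sum]
  · congr 1
    ext z
    rw [Finset.mul_sum]
    refine Finset.sum_congr rfl fun j _ => ?_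
    rw [T_expand, Finset.mul_sum]
    refine Finset.sum_congr rfl fun S _ => ?_
    ring
  · intro j _
    exact integrable_finset_sum _ fun S _ => hi j _ S

lemma taylor_eq {rho : E → ℝ} (hs : ContDiff ℝ ∞ rho) (r : ℝ)
    (h1 : ∫ z in closedBall 0 (3 * r / 4), rho z ∂ν = 1) (f : E → ℝ) (x0 x : E) (M : ℕ) :
    taylorP f x0 M x = ∑ j ∈ Finset.range M, ∑ S : Finset (Fin j),
      Qb ν r rho x0 ((j ! : ℝ)⁻¹ • iteratedFDeriv ℝ j f x0) S x := by
  have := AA_taylor ν hs r 0 f x0 x M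
  have e : om (0:ℝ) x = 1 := by simp [om]
  simp only [e, one_pow, one_mul] at this
  rw [← this]
  unfold AA
  have e2 : ∀ z, Ph 0 z x = x := by intro z; simp [Ph, e]
  simp_rw [e2]
  rw [integral_mul_const, h1, one_mul]

lemma SS_taylor {rho : E → ℝ} (hs : ContDiff ℝ ∞ rho) (r : ℝ) {b : ℕ → ℝ}
    (hb : ∀ p : ℕ, Summable fun k => |b k| * ((2 : ℝ) ^ k) ^ p)
    (h1 : ∫ z in closedBall 0 (3 * r / 4), rho z ∂ν = 1) {t : ℝ} (ht : 1 ≤ t) (f : E → ℝ) (x0 : E) (M : ℕ) :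
    (fun x => SS ν r rho b t (taylorP f x0 M) x - taylorP f x0 M x) =
      fun x => ∑ j ∈ Finset.range M, ∑ S : Finset (Fin j),
        (Gf b (S.card : ℝ) 0 (‖x‖ ^ 2 / t) - 1) •
        Qb ν r rho x0 ((j ! : ℝ)⁻¹ • iteratedFDeriv ℝ j f x0) S x := by
  ext x
  have hom : ∀ (a k : ℕ), b k * om (2 ^ k / t) x ^ a
      = b k * (-((a:ℝ) * 2 ^ k)) ^ 0 * Real.exp (-((a:ℝ) * 2 ^ k) * (‖x‖ ^ 2 / t)) := by
    intro a k
    unfold om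
    rw [← Real.exp_nat_mul, pow_zero, mul_one]
    congr 2
    ring
  have hsum : ∀ a : ℕ, Integrable (fun k => b k * om (2 ^ k / t) x ^ a) (Measure.count : Measure ℕ) := by
    intro a
    rw [integrable_count_iff]
    simp_rw [hom]
    exact (Gf_summable hb (Nat.cast_nonneg a) 0 (by positivity)).norm
  have hG : ∀ a : ℕ, ∫ k, b k * om (2 ^ k / t) x ^ a ∂(Measure.count : Measure ℕ)
      = Gf b (a : ℝ) 0 (‖x‖ ^ 2 / t) := by
    intro a
    rw [integral_countable (hsum a)]
    simp only [hom, Gf]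
    simp
  have key : SS ν r rho b t (taylorP f x0 M) x = ∑ j ∈ Finset.range M, ∑ S : Finset (Fin j),
        Gf b (S.card : ℝ) 0 (‖x‖ ^ 2 / t) *
        Qb ν r rho x0 ((j ! : ℝ)⁻¹ • iteratedFDeriv ℝ j f x0) S x := by
    unfold SS
    simp_rw [AA_taylor ν hs, Finset.mul_sum]
    have hi : ∀ (j : ℕ) (S : Finset (Fin j)), Integrable (fun k => b k * (om (2 ^ k / t) x ^ S.card *
        Qb ν r rho x0 ((j ! : ℝ)⁻¹ • iteratedFDeriv ℝ j f x0) S x)) (Measure.count : Measure ℕ) := by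
      intro j S
      simp_rw [← mul_assoc]
      exact (hsum _).mul_const _
    rw [integral_finset_sum _ fun j _ => integrable_finset_sum _ fun S _ => hi j S]
    refine Finset.sum_congr rfl fun j _ => ?_
    rw [integral_finset_sum _ fun S _ => hi j S]
    refine Finset.sum_congr rfl fun S _ => ?_
    simp_rw [← mul_assoc]
    rw [integral_mul_const, hG]
  rw [key, taylor_eq ν hs r h1, ← Finset.sum_sub_distrib]
  refine Finset.sum_congr rfl fun j _ => ?_
  rw [← Finset.sum_sub_distrib]
  refine Finset.sum_congr rfl fun S _ => ?_
  rw [smul_eq_mul]; ring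

end estt
end FS


namespace FS
open Filter Topology MeasureTheory
open scoped ContDiff Nat

section esttt
variable {E : Type*} [NormedAddCommGroup E] [InnerProductSpace ℝ E] [FiniteDimensional ℝ E]
  [MeasurableSpace E] [BorelSpace E] (ν : Measure E) [ν.IsAddHaarMeasure]

lemma Et_bound {b : ℕ → ℝ} (hb : ∀ p : ℕ, Summable fun k => |b k| * ((2 : ℝ) ^ k) ^ p)
    (h1 : ∑' k, b k = 1) (h2 : ∀ j : ℕ, 1 ≤ j → ∑' k, b k * ((2 : ℝ) ^ k) ^ j = 0)
    {r : ℝ} (hr : 0 < r) (n l a : ℕ) : ∃ C : ℝ, 0 ≤ C ∧ ∀ (t : ℝ) (x : E), 1 ≤ t → x ≠ 0 → ‖x‖ ≤ r → ∀ i ≤ n,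
    ContDiffAt ℝ i (fun x : E => Gf b (a : ℝ) 0 (‖x‖ ^ 2 / t) - 1) x ∧
    ‖iteratedFDeriv ℝ i (fun x : E => Gf b (a : ℝ) 0 (‖x‖ ^ 2 / t) - 1) x‖
      ≤ C * (‖x‖ ^ 2 / t) ^ (l + 1) * (2 * (r + 1) ^ 2) ^ i := by
  choose Ce hCe0 hCe using fun j => Ea_bound hb h1 h2 (Nat.cast_nonneg a : (0:ℝ) ≤ a) l j
  refine ⟨n ! * ∑ j ∈ Finset.range (n + 1), Ce j, mul_nonneg (by positivity) (Finset.sum_nonneg fun j _ => hCe0 j), ?_⟩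
  intro t x ht hx0 hx i hi
  have hX : 0 < ‖x‖ := norm_pos_iff.2 hx0
  have hs : 0 < ‖x‖ ^ 2 / t := by positivity
  have hg : ContDiffAt ℝ i (fun s => Gf b (a : ℝ) 0 s - 1) (‖x‖ ^ 2 / t) :=
    ((Gf_contDiffOn hb (Nat.cast_nonneg a) i 0).contDiffAt (isOpen_Ioi.mem_nhds hs)).sub contDiffAt_const
  have hf : ContDiff ℝ ∞ (fun x : E => ‖x‖ ^ 2 / t) := (contDiff_norm_sq ℝ).div_const t
  refine ⟨ContDiffAt.comp x (g := fun s => Gf b (a : ℝ) 0 s - 1) (f := fun x : E => ‖x‖ ^ 2 / t) hg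
    (hf.contDiffAt.of_le (natle i)), ?_⟩
  have := comp_le (g := fun s => Gf b (a : ℝ) 0 s - 1) (f := fun x : E => ‖x‖ ^ 2 / t) hg
    (hf.contDiffAt.of_le (natle i)) (C := (∑ j ∈ Finset.range (n + 1), Ce j) * (‖x‖ ^ 2 / t) ^ (l + 1))
    (D := 2 * (r + 1) ^ 2) ?_ ?_
  · refine this.trans ?_
    have hfac : (i ! : ℝ) ≤ n ! := by exact_mod_cast Nat.factorial_le hi
    have hS : 0 ≤ ∑ j ∈ Finset.range (n + 1), Ce j := Finset.sum_nonneg fun j _ => hCe0 j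
    calc _ ≤ n ! * ((∑ j ∈ Finset.range (n + 1), Ce j) * (‖x‖ ^ 2 / t) ^ (l + 1)) * (2 * (r + 1) ^ 2) ^ i := by
          gcongr
      _ = _ := by ring
  · intro j hj
    refine (hCe j _ hs).trans ?_
    gcongr
    exact Finset.single_le_sum (f := Ce) (fun j _ => hCe0 j) (Finset.mem_range.2 (by omega))
  · intro j hj1 hj
    have e : (fun x : E => ‖x‖ ^ 2 / t) = fun x => t⁻¹ • ‖x‖ ^ 2 := by
      ext x; rw [smul_eq_mul]; ring
    rw [e, smul_norm ((contDiff_norm_sq ℝ).contDiffAt)]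
    have hti : |t⁻¹| ≤ 1 := by
      rw [abs_of_nonneg (by positivity)]; exact inv_le_one_of_one_le₀ ht
    calc _ ≤ 1 * (2 * (r + 1) ^ 2) ^ j :=
          mul_le_mul hti (normsq_bound hr.le hx j hj1) (norm_nonneg _) zero_le_one
      _ = _ := one_mul _

lemma est2P {rho : E → ℝ} (hs : ContDiff ℝ ∞ rho) (hc : HasCompactSupport rho)
    {r : ℝ} (hr : 0 < r) {b : ℕ → ℝ} (hb : ∀ p : ℕ, Summable fun k => |b k| * ((2 : ℝ) ^ k) ^ p)
    (h1 : ∑' k, b k = 1) (h2 : ∀ j : ℕ, 1 ≤ j → ∑' k, b k * ((2 : ℝ) ^ k) ^ j = 0)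
    (hrho : ∫ z in closedBall 0 (3 * r / 4), rho z ∂ν = 1) (n k l M : ℕ) :
    ∃ C : ℝ, 0 ≤ C ∧ ∀ (t : ℝ) (f : E → ℝ) (x0 : E) (B : ℝ), 1 ≤ t → 0 ≤ B → x0 ≠ 0 → ‖x0‖ < r →
    (∀ j < M, ‖iteratedFDeriv ℝ j f x0‖ ≤ B * ‖x0‖ ^ k) → ∀ i ≤ n,
    ‖iteratedFDeriv ℝ i (fun x => SS ν r rho b t (taylorP f x0 M) x - taylorP f x0 M x) x0‖
      ≤ C * (t⁻¹ ^ l * ‖x0‖ ^ (k + 2 * l) * B) := by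
  choose Ce hCe0 hCe using fun a => Et_bound (E := E) hb h1 h2 hr n l a
  choose Cq hCq0 hCq using fun j => Qb_bound ν hs hc hr j n
  set D := 2 * (r + 1) ^ 2 with hD
  have hD1 : 1 ≤ D := by rw [hD]; nlinarith
  refine ⟨∑ j ∈ Finset.range M, ∑ S : Finset (Fin j), 2 ^ n * Ce S.card * Cq j * D ^ n * r ^ 2,
    Finset.sum_nonneg fun j _ => Finset.sum_nonneg fun S _ => ?_, ?_⟩
  · have := hCe0 S.card
    have := hCq0 j
    positivity
  intro t f x0 B ht hB hx0 hxr hfb i hi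
  rw [SS_taylor ν hs r hb hrho ht]
  set s := ‖x0‖ ^ 2 / t with hsdef
  have hs0 : 0 ≤ s := by positivity
  have hcd : ∀ (j : ℕ) (S : Finset (Fin j)), ContDiffAt ℝ i (fun x : E => (Gf b (S.card : ℝ) 0 (‖x‖ ^ 2 / t) - 1) •
        Qb ν r rho x0 ((j ! : ℝ)⁻¹ • iteratedFDeriv ℝ j f x0) S x) x0 := fun j S =>
    ((hCe S.card t x0 ht hx0 hxr.le i hi).1).smul
      ((Qb_smooth ν hs r x0 _ S).2.contDiffAt.of_le (natle i))
  rw [iteratedFDeriv_fun_sum_apply fun j _ => ContDiffAt.sum fun S _ => hcd j S, Finset.sum_mul]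
  refine (norm_sum_le _ _).trans (Finset.sum_le_sum fun j hj => ?_)
  rw [iteratedFDeriv_fun_sum_apply fun S _ => hcd j S, Finset.sum_mul]
  refine (norm_sum_le _ _).trans (Finset.sum_le_sum fun S _ => ?_)
  set T : E [×j]→L[ℝ] ℝ := (j ! : ℝ)⁻¹ • iteratedFDeriv ℝ j f x0 with hT
  have hTn : ‖T‖ ≤ B * ‖x0‖ ^ k := by
    rw [hT, norm_smul]
    have : ‖(j ! : ℝ)⁻¹‖ ≤ 1 := by
      rw [Real.norm_of_nonneg (by positivity)]
      exact inv_le_one_of_one_le₀ (by exact_mod_cast Nat.one_le_iff_ne_zero.2 (Nat.factorial_ne_zero j))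
    calc _ ≤ 1 * (B * ‖x0‖ ^ k) :=
          mul_le_mul this (hfb j (Finset.mem_range.1 hj)) (norm_nonneg _) zero_le_one
      _ = _ := one_mul _
  have hce := hCe0 S.card
  have hcq := hCq0 j
  have := smul_le (n := i) (x := x0) (f := fun x : E => Gf b (S.card : ℝ) 0 (‖x‖ ^ 2 / t) - 1)
    (g := Qb ν r rho x0 T S) (A := Ce S.card * s ^ (l + 1)) (B := Cq j * ‖T‖) (M := D)
    (hCe S.card t x0 ht hx0 hxr.le i hi).1
    ((Qb_smooth ν hs r x0 T S).2.contDiffAt.of_le (natle i)) (by positivity) (by linarith)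
    (fun i' hi' => (hCe S.card t x0 ht hx0 hxr.le i' (hi'.trans hi)).2) ?_
  · refine this.trans ?_
    have e1 : s ^ (l + 1) ≤ r ^ 2 * (t⁻¹ ^ l * ‖x0‖ ^ (2 * l)) := by
      have : s ≤ r ^ 2 := by
        rw [hsdef]
        refine (div_le_self (by positivity) ht).trans ?_
        gcongr
      calc s ^ (l + 1) = s * s ^ l := by ring
        _ ≤ r ^ 2 * s ^ l := by gcongr
        _ = _ := by rw [hsdef, div_eq_mul_inv, mul_pow, ← pow_mul]; ring
    calc _ ≤ 2 ^ n * (Ce S.card * (r ^ 2 * (t⁻¹ ^ l * ‖x0‖ ^ (2 * l)))) * (Cq j * (B * ‖x0‖ ^ k)) * D ^ n := by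
          have a1 : (2:ℝ) ^ i ≤ 2 ^ n := pow_le_pow_right₀ (by norm_num) hi
          have a2 : D ^ i ≤ D ^ n := pow_le_pow_right₀ hD1 hi
          gcongr
      _ = _ := by rw [pow_add ‖x0‖]; ring
  · intro i' hi'
    refine (hCq j T S x0 x0 hxr.le hxr.le i' (hi'.trans hi)).trans ?_
    exact le_mul_of_one_le_right (by positivity) (one_le_pow₀ hD1)

lemma two_pow_one_le (k : ℕ) : (1:ℝ) ≤ 2 ^ k := one_le_pow₀ (by norm_num)

lemma est2 {rho : E → ℝ} (hs : ContDiff ℝ ∞ rho) (hc : HasCompactSupport rho)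
    {r : ℝ} (hr : 0 < r) {b : ℕ → ℝ} (hb : ∀ p : ℕ, Summable fun k => |b k| * ((2 : ℝ) ^ k) ^ p)
    (h1 : ∑' k, b k = 1) (h2 : ∀ j : ℕ, 1 ≤ j → ∑' k, b k * ((2 : ℝ) ^ k) ^ j = 0)
    (hrho : ∫ z in closedBall 0 (3 * r / 4), rho z ∂ν = 1) (n k l : ℕ) :
    ∃ C : ℝ, 0 ≤ C ∧ ∀ (t : ℝ) (f : E → ℝ) (x0 : E) (B : ℝ), 1 ≤ t → 0 ≤ B → x0 ≠ 0 → ‖x0‖ < r →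
    Bd r f →
    (∀ i ≤ n + l, ∀ y ∈ ball (0 : E) r, ‖iteratedFDeriv ℝ i f y‖ ≤ B * ‖y‖ ^ k) → ∀ i ≤ n,
    ‖iteratedFDeriv ℝ i (fun x => SS ν r rho b t f x - f x) x0‖
      ≤ C * (t⁻¹ ^ l * ‖x0‖ ^ (k + 2 * l) * B) := by
  obtain ⟨C1, hC10, p, hC1⟩ := est2g ν hs hc hr n k l
  obtain ⟨C2, hC20, hC2⟩ := est2P ν hs hc hr hb h1 h2 hrho n k l (n + l)
  have hS : 0 ≤ ∑' k, |b k| * ((2 : ℝ) ^ k) ^ p := tsum_nonneg fun k => by positivity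
  refine ⟨C2 + (C1 * ∑' k, |b k| * ((2 : ℝ) ^ k) ^ p) + C1, by positivity, ?_⟩
  intro t f x0 B ht hB hx0 hxr hf hfb i hi
  have hx0m : x0 ∈ ball (0:E) r := mem_ball_zero_iff.2 hxr
  have hsub : ball (0:E) r ⊆ WW r t := ball_subset_closedBall.trans (WW_sup hr ht)
  set P := taylorP f x0 (n + l) with hP
  set g := fun y => f y - P y with hg
  have hPB : Bd r P := Bd.of_contDiff (contDiff_taylorP f x0 (n + l))
  have hgB : Bd r g := by
    have := hf.add (hPB.smul (-1))
    have e : g = fun x => f x + -1 * P x := by ext x; rw [hg]; ring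
    rwa [e]
  have hcd : ∀ {h : E → ℝ}, Bd r h → ContDiffAt ℝ i (SS ν r rho b t h) x0 := fun hh =>
    ((SS_smooth hb hs hc hr ht hh).2.contDiffAt ((WW_open r t).mem_nhds (hsub hx0m))).of_le (natle i)
  have hheq : (fun x => SS ν r rho b t f x - f x) =ᶠ[𝓝 x0]
      fun x => (SS ν r rho b t P x - P x) + (SS ν r rho b t g x - g x) := by
    filter_upwards [isOpen_ball.mem_nhds hx0m] with x hx
    have e : f = fun x => P x + g x := by ext x; rw [hg]; ring
    have e2 := SS_add (ν := ν) hb hs hc hr ht hPB hgB (hsub hx)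
    rw [← e] at e2
    rw [e2]
    have : f x = P x + g x := congrFun e x
    rw [this]; ring
  rw [(Filter.EventuallyEq.iteratedFDeriv (𝕜 := ℝ) hheq i).self_of_nhds]
  rw [fun_iteratedFDeriv_add_apply ((hcd hPB).sub (hPB.cda hx0m i)) ((hcd hgB).sub (hgB.cda hx0m i)),
    fun_iteratedFDeriv_sub_apply (f := SS ν r rho b t g) (hcd hgB) (hgB.cda hx0m i)]
  have a1 := hC2 t f x0 B ht hB hx0 hxr (fun j hj => hfb j hj.le x0 hx0m) i hi
  have a2 := SS_bound (ν := ν) (N := i) (p := p) hb hs hc hr ht hgB (hsub hx0m)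
    (Q := C1 * (t⁻¹ ^ l * ‖x0‖ ^ (k + 2 * l) * B))
    (fun k' => (hC1 (2 ^ k') t f x0 B (two_pow_one_le k') ht hB hxr hf.1 hfb i hi).1)
  have a3 := (hC1 1 t f x0 B le_rfl ht hB hxr hf.1 hfb i hi).2
  refine (norm_add_le _ _).trans ((add_le_add a1 ((norm_sub_le _ _).trans (add_le_add a2 a3))).trans
    (le_of_eq ?_))
  ring

lemma est1S {rho : E → ℝ} (hs : ContDiff ℝ ∞ rho) (hc : HasCompactSupport rho)
    {r : ℝ} (hr : 0 < r) (hsupp : ∀ z, r / 2 ≤ ‖z‖ → rho z = 0)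
    {b : ℕ → ℝ} (hb : ∀ p : ℕ, Summable fun k => |b k| * ((2 : ℝ) ^ k) ^ p)
    (n k l : ℕ) :
    ∃ C : ℝ, 0 ≤ C ∧ ∀ (t : ℝ) (f : E → ℝ) (x0 : E) (B : ℝ), 1 ≤ t → 0 ≤ B → x0 ≠ 0 → ‖x0‖ < r →
    Bd r f →
    (∀ i ≤ n, ∀ y ∈ ball (0 : E) r, ‖iteratedFDeriv ℝ i f y‖ ≤ B * ‖y‖ ^ (k + 2 * l)) → ∀ i ≤ n + l,
    ‖iteratedFDeriv ℝ i (SS ν r rho b t f) x0‖ ≤ C * (t ^ l * ‖x0‖ ^ k * B) := by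
  have key : ∀ N : ℕ, ∃ C : ℝ, 0 ≤ C ∧ (N ≤ n + l → ∀ (t : ℝ) (f : E → ℝ) (x0 : E) (B : ℝ), 1 ≤ t → 0 ≤ B →
      x0 ≠ 0 → ‖x0‖ < r → Bd r f →
      (∀ i ≤ n, ∀ y ∈ ball (0 : E) r, ‖iteratedFDeriv ℝ i f y‖ ≤ B * ‖y‖ ^ (k + 2 * l)) →
      ‖iteratedFDeriv ℝ N (SS ν r rho b t f) x0‖ ≤ C * (t ^ l * ‖x0‖ ^ k * B)) := by
    intro N
    by_cases hN : N ≤ n + l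
    · obtain ⟨C, hC0, p, hC⟩ := est1 ν hs hc hr hsupp n k l N hN
      have hS : 0 ≤ ∑' k, |b k| * ((2 : ℝ) ^ k) ^ p := tsum_nonneg fun k => by positivity
      refine ⟨C * ∑' k, |b k| * ((2 : ℝ) ^ k) ^ p, by positivity, fun _ => ?_⟩
      intro t f x0 B ht hB hx0 hxr hf hfb
      have hx : x0 ∈ WW r t := WW_sup hr ht (mem_closedBall_zero_iff.2 hxr.le)
      have := SS_bound (ν := ν) (N := N) (p := p) hb hs hc hr ht hf hx
        (Q := C * (t ^ l * ‖x0‖ ^ k * B)) (fun k' =>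
          (hC (2 ^ k') t f x0 B (two_pow_one_le k') ht hB hx0 hxr hf.1 hfb).trans (le_of_eq (by ring)))
      exact this.trans (le_of_eq (by ring))
    · exact ⟨0, le_rfl, fun h => absurd h hN⟩
  choose C hC0 hC using key
  refine ⟨∑ N ∈ Finset.range (n + l + 1), C N, Finset.sum_nonneg fun N _ => hC0 N, ?_⟩
  intro t f x0 B ht hB hx0 hxr hf hfb i hi
  refine (hC i hi t f x0 B ht hB hx0 hxr hf hfb).trans ?_
  gcongr
  exact Finset.single_le_sum (f := C) (fun j _ => hC0 j) (Finset.mem_range.2 (by omega))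

end esttt
end FS


namespace FS
open Filter Topology MeasureTheory
open scoped ContDiff Nat

section fin
variable {m : ℕ} {r : ℝ}

local notation "EE" => EuclideanSpace ℝ (Fin m)

lemma udo (hr : 0 < r) : UniqueDiffOn ℝ (closedBall (0 : EE) r) :=
  uniqueDiffOn_convex (convex_closedBall _ _) (by
    rw [interior_closedBall _ hr.ne']; exact nonempty_ball.2 hr)

lemma within_eq (f : EE → ℝ) (i : ℕ) {x : EE} (hx : x ∈ ball (0 : EE) r) :
    iteratedFDerivWithin ℝ i f (closedBall 0 r) x = iteratedFDeriv ℝ i f x := by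
  rw [← iteratedFDerivWithin_univ]
  refine iteratedFDerivWithin_congr_set ?_ i
  filter_upwards [isOpen_ball.mem_nhds hx] with y hy
  exact propext ⟨fun _ => trivial, fun _ => ball_subset_closedBall hy⟩

lemma flat_zero (hr : 0 < r) {f : EE → ℝ} (hf : FlatSmoothOnBall m r f) (i : ℕ) :
    iteratedFDeriv ℝ i f 0 = 0 := by
  rw [← within_eq f i (mem_ball_self hr)]; exact hf.2 i

lemma flat_Bd (hr : 0 < r) {f : EE → ℝ} (hf : FlatSmoothOnBall m r f) : Bd r f := by
  refine ⟨hf.1.mono ball_subset_closedBall, fun i => ?_⟩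
  obtain ⟨B, hB⟩ := (isCompact_closedBall (0:EE) r).exists_bound_of_continuousOn
    (hf.1.continuousOn_iteratedFDerivWithin (m := i) (natle i) (udo hr))
  refine ⟨B, fun y hy => ?_⟩
  rw [← within_eq f i hy]
  exact hB y (ball_subset_closedBall hy)

lemma ext_bound (hr : 0 < r) {f : EE → ℝ} (hf : ContDiffOn ℝ ∞ f (closedBall 0 r)) {i k : ℕ} {c : ℝ}
    (h : ∀ x ∈ ball (0 : EE) r, ‖iteratedFDeriv ℝ i f x‖ ≤ c * ‖x‖ ^ k) :
    ∀ x ∈ closedBall (0 : EE) r, ‖iteratedFDerivWithin ℝ i f (closedBall 0 r) x‖ ≤ c * ‖x‖ ^ k := by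
  intro x hx
  have h1 : ContinuousWithinAt (fun x => ‖iteratedFDerivWithin ℝ i f (closedBall 0 r) x‖)
      (ball (0 : EE) r) x :=
    ((hf.continuousOn_iteratedFDerivWithin (m := i) (natle i) (udo hr)).norm x hx).mono
      ball_subset_closedBall
  have h2 : ContinuousWithinAt (fun x : EE => c * ‖x‖ ^ k) (ball (0 : EE) r) x :=
    (by fun_prop : Continuous (fun x : EE => c * ‖x‖ ^ k)).continuousWithinAt
  refine ContinuousWithinAt.closure_le (s := ball (0 : EE) r) ?_ h1 h2 ?_
  · rwa [closure_ball _ hr.ne']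
  · intro y hy
    rw [within_eq f i hy]; exact h y hy

lemma flatNorm_le (hr : 0 < r) {g : EE → ℝ} (hg : ContDiffOn ℝ ∞ g (closedBall 0 r)) {n k : ℕ} {c : ℝ}
    (hc : 0 ≤ c) (h : ∀ i ≤ n, ∀ x ∈ ball (0 : EE) r, ‖iteratedFDeriv ℝ i g x‖ ≤ c * ‖x‖ ^ k) :
    flatNorm m r n k g ≤ c := by
  refine Real.iSup_le ?_ hc
  rintro ⟨⟨x, hx⟩, i⟩
  have hX : 0 < ‖x‖ := norm_pos_iff.2 (by simpa using hx.2)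
  have := ext_bound hr hg (h i (by omega)) x hx.1
  simp only [zpow_neg, zpow_natCast]
  rw [inv_mul_le_iff₀ (by positivity), mul_comm]
  exact this

lemma flat_pt_exists (hr : 0 < r) {f : EE → ℝ} (hf : FlatSmoothOnBall m r f) (i k : ℕ) :
    ∃ M : ℝ, ∀ x ∈ ball (0 : EE) r, ‖iteratedFDeriv ℝ i f x‖ ≤ M * ‖x‖ ^ k := by
  have hB := flat_Bd hr hf
  obtain ⟨M, hM⟩ := hB.2 (i + k)
  refine ⟨M, fun x hx => ?_⟩
  have := vanish_bound isOpen_ball hB.1 subset_rfl (convex_ball _ _) (mem_ball_self hr) (N := i + k)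
    (fun j _ => flat_zero hr hf j) hM k (by omega) x hx
  rw [Nat.add_sub_cancel, sub_zero] at this
  exact this

lemma flatNorm_nonneg (n k : ℕ) (f : EE → ℝ) : 0 ≤ flatNorm m r n k f :=
  Real.iSup_nonneg fun p => by positivity

lemma flatNorm_pt (hr : 0 < r) {f : EE → ℝ} (hf : FlatSmoothOnBall m r f) {n : ℕ} (k : ℕ) {i : ℕ}
    (hi : i ≤ n) : ∀ x ∈ ball (0 : EE) r, ‖iteratedFDeriv ℝ i f x‖ ≤ flatNorm m r n k f * ‖x‖ ^ k := by
  intro x hx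
  by_cases hx0 : x = 0
  · subst hx0
    rw [flat_zero hr hf, norm_zero]
    exact mul_nonneg (flatNorm_nonneg _ _ _) (by positivity)
  have hX : 0 < ‖x‖ := norm_pos_iff.2 hx0
  have hbdd : BddAbove (range fun p : (closedBall (0 : EE) r \ {0} : Set EE) × Fin (n + 1) =>
      ‖(p.1 : EE)‖ ^ (-(k : ℤ)) * ‖iteratedFDerivWithin ℝ p.2 f (closedBall 0 r) p.1‖) := by
    choose M hM using fun i => flat_pt_exists hr hf i k
    refine ⟨∑ i ∈ Finset.range (n + 1), |M i|, ?_⟩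
    rintro _ ⟨⟨⟨x, hx⟩, i⟩, rfl⟩
    have hX : 0 < ‖x‖ := norm_pos_iff.2 (by simpa using hx.2)
    have := ext_bound hr hf.1 (hM i) x hx.1
    simp only [zpow_neg, zpow_natCast]
    rw [inv_mul_le_iff₀ (by positivity), mul_comm]
    refine this.trans (mul_le_mul_of_nonneg_right ?_ (by positivity))
    exact (le_abs_self _).trans (Finset.single_le_sum (f := fun j => |M j|)
        (fun _ _ => abs_nonneg _) (Finset.mem_range.2 i.2))
  have := le_ciSup hbdd (⟨x, ball_subset_closedBall hx, by simpa using hx0⟩, ⟨i, by omega⟩)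
  simp only [zpow_neg, zpow_natCast] at this
  rw [inv_mul_le_iff₀ (by positivity), within_eq f i hx, mul_comm] at this
  simpa [flatNorm] using this

variable (m r) in
/-- The submodule of flat functions. -/
def flatSub (hr : 0 < r) : Submodule ℝ (EE → ℝ) where
  carrier := {f | FlatSmoothOnBall m r f}
  zero_mem' := by
    refine ⟨contDiffOn_const, fun i => ?_⟩
    rw [within_eq _ i (mem_ball_self hr)]
    have : iteratedFDeriv ℝ i (0 : EE → ℝ) = 0 := iteratedFDeriv_zero_fun
    rw [this]; rfl
  add_mem' := by
    intro f g hf hg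
    refine ⟨hf.1.add hg.1, fun i => ?_⟩
    have h0 := mem_ball_self (x := (0 : EE)) hr
    rw [within_eq _ i h0, iteratedFDeriv_add_apply ((flat_Bd hr hf).cda h0 i) ((flat_Bd hr hg).cda h0 i),
      flat_zero hr hf, flat_zero hr hg, add_zero]
  smul_mem' := by
    intro c f hf
    refine ⟨hf.1.const_smul c, fun i => ?_⟩
    have h0 := mem_ball_self (x := (0 : EE)) hr
    rw [within_eq _ i h0, iteratedFDeriv_const_smul_apply ((flat_Bd hr hf).cda h0 i),
      flat_zero hr hf, smul_zero]

theorem main (hr : 0 < r) :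
    ∃ S : ℝ → ((EuclideanSpace ℝ (Fin m) → ℝ) →ₗ[ℝ] (EuclideanSpace ℝ (Fin m) → ℝ)),
      (∀ t : ℝ, 1 ≤ t → ∀ f, FlatSmoothOnBall m r f → FlatSmoothOnBall m r (S t f)) ∧
      ∀ n k l : ℕ, ∃ C > (0 : ℝ), ∀ f, FlatSmoothOnBall m r f → ∀ t : ℝ, 1 ≤ t →
        flatNorm m r (n + l) k (S t f) ≤ C * t ^ l * flatNorm m r n (k + 2 * l) f ∧
        flatNorm m r n (k + 2 * l) (S t f - f) ≤
          C * t ^ (-(l : ℤ)) * flatNorm m r (n + l) k f := by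
  obtain ⟨b, hb, hb1, hb2⟩ := exists_b
  set ν : Measure EE := volume with hν
  let bump : ContDiffBump (0 : EE) := ⟨r / 4, r / 2, by linarith, by linarith⟩
  set rho : EE → ℝ := bump.normed ν with hrho
  have hs : ContDiff ℝ ∞ rho := bump.contDiff_normed
  have hc : HasCompactSupport rho := bump.hasCompactSupport_normed
  have hsupp : ∀ z, r / 2 ≤ ‖z‖ → rho z = 0 := by
    intro z hz
    have : z ∉ Function.support rho := by
      rw [hrho, bump.support_normed_eq]
      simpa [bump] using hz
    simpa using this
  have hrho1 : ∫ z in closedBall 0 (3 * r / 4), rho z ∂ν = 1 := by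
    rw [setIntegral_eq_integral_of_forall_compl_eq_zero, hrho, bump.integral_normed]
    intro z hz
    refine hsupp z ?_
    have : ¬ ‖z‖ ≤ 3 * r / 4 := by simpa using hz
    linarith [not_le.1 this]
  have hL : ∀ t : ℝ, ∃ S : (EE → ℝ) →ₗ[ℝ] (EE → ℝ), 1 ≤ t → ∀ f, FlatSmoothOnBall m r f →
      ∀ x ∈ closedBall (0 : EE) r, S f x = SS ν r rho b t f x := by
    intro t
    by_cases ht : 1 ≤ t
    · let L : flatSub m r hr →ₗ[ℝ] (EE → ℝ) :=
        { toFun := fun f => (closedBall (0 : EE) r).indicator (SS ν r rho b t f.1)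
          map_add' := by
            intro f g
            ext x
            by_cases hx : x ∈ closedBall (0 : EE) r
            · rw [Pi.add_apply, indicator_of_mem hx, indicator_of_mem hx, indicator_of_mem hx]
              exact SS_add hb hs hc hr ht (flat_Bd hr f.2) (flat_Bd hr g.2) (WW_sup hr ht hx)
            · rw [Pi.add_apply, indicator_of_notMem hx, indicator_of_notMem hx, indicator_of_notMem hx,
                add_zero]
          map_smul' := by
            intro c f
            ext x
            by_cases hx : x ∈ closedBall (0 : EE) r
            · rw [Pi.smul_apply, indicator_of_mem hx, indicator_of_mem hx]
              exact SS_smul c f.1 x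
            · rw [Pi.smul_apply, indicator_of_notMem hx, indicator_of_notMem hx, smul_zero] }
      obtain ⟨S, hS⟩ := L.exists_extend
      refine ⟨S, fun _ f hf x hx => ?_⟩
      have := congrFun (LinearMap.congr_fun hS ⟨f, hf⟩) x
      have e : L ⟨f, hf⟩ x = SS ν r rho b t f x := indicator_of_mem hx _
      rw [← e, ← this]; rfl
    · exact ⟨0, fun h => absurd h ht⟩
  choose S hS using hL
  have hev : ∀ t, 1 ≤ t → ∀ f, FlatSmoothOnBall m r f → ∀ x ∈ ball (0 : EE) r,
      S t f =ᶠ[𝓝 x] SS ν r rho b t f := by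
    intro t ht f hf x hx
    filter_upwards [isOpen_ball.mem_nhds hx] with y hy
    exact hS t ht f hf y (ball_subset_closedBall hy)
  have hflat : ∀ t : ℝ, 1 ≤ t → ∀ f, FlatSmoothOnBall m r f → FlatSmoothOnBall m r (S t f) := by
    intro t ht f hf
    refine ⟨((SS_smooth hb hs hc hr ht (flat_Bd hr hf)).2.mono (WW_sup hr ht)).congr (hS t ht f hf), ?_⟩
    intro i
    have h0 := mem_ball_self (x := (0 : EE)) hr
    rw [within_eq _ i h0, (Filter.EventuallyEq.iteratedFDeriv (𝕜 := ℝ) (hev t ht f hf 0 h0) i).self_of_nhds]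
    exact SS_zero hb hs hc hr ht (flat_Bd hr hf) (flat_zero hr hf) i
  refine ⟨S, hflat, ?_⟩
  intro n k l
  obtain ⟨C1, hC10, hC1⟩ := est1S ν hs hc hr hsupp hb n k l
  obtain ⟨C2, hC20, hC2⟩ := est2 ν hs hc hr hb hb1 hb2 hrho1 n k l
  refine ⟨C1 + C2 + 1, by positivity, ?_⟩
  intro f hf t ht
  have ht0 : 0 < t := by linarith
  have hB := flat_Bd hr hf
  have hSf := hflat t ht f hf
  constructor
  · have hN := flatNorm_nonneg (r := r) n (k + 2 * l) f
    refine (flatNorm_le hr hSf.1 (c := C1 * t ^ l * flatNorm m r n (k + 2 * l) f) (by positivity) ?_).trans ?_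
    · intro i hi x hx
      by_cases hx0 : x = 0
      · subst hx0
        rw [flat_zero hr hSf, norm_zero]; positivity
      rw [(Filter.EventuallyEq.iteratedFDeriv (𝕜 := ℝ) (hev t ht f hf x hx) i).self_of_nhds]
      refine (hC1 t f x _ ht hN hx0 (mem_ball_zero_iff.1 hx) hB
        (fun i hi y hy => flatNorm_pt hr hf _ hi y hy) i hi).trans (le_of_eq (by ring))
    · gcongr
      linarith
  · have hN := flatNorm_nonneg (r := r) (n + l) k f
    have hdiff : FlatSmoothOnBall m r (S t f - f) := (flatSub m r hr).sub_mem hSf hf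
    refine (flatNorm_le hr hdiff.1 (c := C2 * t⁻¹ ^ l * flatNorm m r (n + l) k f) (by positivity) ?_).trans ?_
    · intro i hi x hx
      by_cases hx0 : x = 0
      · subst hx0
        rw [flat_zero hr hdiff, norm_zero]; positivity
      have hev2 : (S t f - f) =ᶠ[𝓝 x] fun x => SS ν r rho b t f x - f x := by
        filter_upwards [hev t ht f hf x hx] with y hy
        rw [Pi.sub_apply, hy]
      rw [(Filter.EventuallyEq.iteratedFDeriv (𝕜 := ℝ) hev2 i).self_of_nhds]
      refine (hC2 t f x _ ht hN hx0 (mem_ball_zero_iff.1 hx) hB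
        (fun i hi y hy => flatNorm_pt hr hf _ hi y hy) i hi).trans (le_of_eq (by ring))
    · rw [zpow_neg, zpow_natCast, ← inv_pow]
      gcongr
      linarith

end fin
end FS

/-- for each `m ≥ 1` and `r > 0` there is a family of linear smoothing
operators `S_t : C^∞₀(B̄_r) → C^∞₀(B̄_r)` (`t ≥ 1`) with
`⟨S_t f⟩_{n+l,k,r} ≤ C t^l ⟨f⟩_{n,k+2l,r}` and
`⟨(S_t − id) f⟩_{n,k+2l,r} ≤ C t^{-l} ⟨f⟩_{n+l,k,r}`. -/
theorem smoothing_operators_flat (m : ℕ) (hm : 1 ≤ m) (r : ℝ) (hr : 0 < r) :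
    ∃ S : ℝ → ((EuclideanSpace ℝ (Fin m) → ℝ) →ₗ[ℝ] (EuclideanSpace ℝ (Fin m) → ℝ)),
      (∀ t : ℝ, 1 ≤ t → ∀ f, FlatSmoothOnBall m r f → FlatSmoothOnBall m r (S t f)) ∧
      ∀ n k l : ℕ, ∃ C > (0 : ℝ), ∀ f, FlatSmoothOnBall m r f → ∀ t : ℝ, 1 ≤ t →
        flatNorm m r (n + l) k (S t f) ≤ C * t ^ l * flatNorm m r n (k + 2 * l) f ∧
        flatNorm m r n (k + 2 * l) (S t f - f) ≤
          C * t ^ (-(l : ℤ)) * flatNorm m r (n + l) k f := by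
  exact FS.main hr
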